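/- Let u : ℝ² → ℝ be a C² function such that Δu ≤ 0 everywhere, the function K := (-Δu)·e^{-2u} is bounded on ℝ², Δu is not identically zero, and the conformal metric e^{2u}(dx²+dy²) is complete in the sense that for every C¹ curve γ : [0,1) → ℝ² with |γ(t)| → ∞ as t → 1⁻ one has ∫₀¹ e^{u(γ(t))}‖γ′(t)‖ dt = ∞. Then there exists m ∈ (0,1] such that u(z)/log√(1+|z|²) → -m as |z| → ∞ (equivalently, u(z) = -m·log√(1+|z|²) + o(log√(1+|z|²)) as |z| → ∞). -/

import Mathlib

open MeasureTheory Filter Metric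
open scoped ENNReal

/-- The Euclidean Laplacian of a function on `ℝ²`:
`Δu = ∂²u/∂x² + ∂²u/∂y²`. -/
noncomputable def lap (u : EuclideanSpace ℝ (Fin 2) → ℝ)
    (z : EuclideanSpace ℝ (Fin 2)) : ℝ :=
  fderiv ℝ (fun w => fderiv ℝ u w (EuclideanSpace.single 0 1)) z (EuclideanSpace.single 0 1) +
  fderiv ℝ (fun w => fderiv ℝ u w (EuclideanSpace.single 1 1)) z (EuclideanSpace.single 1 1)

/-- Integration over a disc in polar coordinates, through circle averages. -/
theorem setIntegral_ball_eq_circleAverage {g : ℂ → ℝ} (hg : Continuous g) (c : ℂ) {R : ℝ}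
    (hR : 0 ≤ R) :
    ∫ z in ball c R, g z = ∫ s in (0 : ℝ)..R, s * (2 * Real.pi * Real.circleAverage g c s) := by
  have h1 : ∫ z in ball c R, g z = ∫ z, (ball (0 : ℂ) R).indicator (fun z => g (c + z)) z := by
    rw [← integral_indicator measurableSet_ball,
      ← integral_add_left_eq_self (fun z => (ball c R).indicator g z) c]
    congr 1 with z
    simp [Set.indicator, dist_eq_norm]
  rw [h1, ← Complex.integral_comp_polarCoord_symm, polarCoord_target]
  have h2 : ∫ p in Set.Ioi (0 : ℝ) ×ˢ Set.Ioo (-Real.pi) Real.pi,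
      p.1 • (ball (0 : ℂ) R).indicator (fun z => g (c + z)) (Complex.polarCoord.symm p) =
      ∫ p in Set.Ioo (0 : ℝ) R ×ˢ Set.Ioo (-Real.pi) Real.pi, p.1 * g (circleMap c p.1 p.2) := by
    rw [← integral_indicator (measurableSet_Ioi.prod measurableSet_Ioo),
      ← integral_indicator (measurableSet_Ioo.prod measurableSet_Ioo)]
    congr 1 with p
    by_cases hp : p ∈ Set.Ioi (0 : ℝ) ×ˢ Set.Ioo (-Real.pi) Real.pi
    · have hp1 : 0 < p.1 := hp.1
      have hn : ‖Complex.polarCoord.symm p‖ = p.1 := by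
        rw [Complex.norm_polarCoord_symm, abs_of_pos hp1]
      have he : c + Complex.polarCoord.symm p = circleMap c p.1 p.2 := by
        rw [Complex.polarCoord_symm_apply, circleMap, Complex.exp_mul_I]
        push_cast; rfl
      rw [Set.indicator_of_mem hp]
      by_cases hR : p.1 < R
      · rw [Set.indicator_of_mem (by simpa [hn, abs_of_pos hp1] using hR), he,
          Set.indicator_of_mem (show p ∈ Set.Ioo (0 : ℝ) R ×ˢ Set.Ioo (-Real.pi) Real.pi from
            ⟨⟨hp1, hR⟩, hp.2⟩)]
        rfl
      · rw [Set.indicator_of_notMem (by simpa [hn, abs_of_pos hp1] using hR),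
          Set.indicator_of_notMem (fun h => hR h.1.2)]
        simp
    · rw [Set.indicator_of_notMem hp, Set.indicator_of_notMem]
      exact fun h => hp ⟨h.1.1, h.2⟩
  rw [h2]
  have hcont : Continuous fun p : ℝ × ℝ => p.1 * g (circleMap c p.1 p.2) := by
    unfold circleMap; fun_prop
  have hint : IntegrableOn (fun p : ℝ × ℝ => p.1 * g (circleMap c p.1 p.2))
      (Set.Ioo (0 : ℝ) R ×ˢ Set.Ioo (-Real.pi) Real.pi) (volume.prod volume) := by
    have : IntegrableOn (fun p : ℝ × ℝ => p.1 * g (circleMap c p.1 p.2))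
      (Set.Icc (0 : ℝ) R ×ˢ Set.Icc (-Real.pi) Real.pi) (volume.prod volume) :=
      hcont.continuousOn.integrableOn_compact (isCompact_Icc.prod isCompact_Icc)
    exact this.mono_set (Set.prod_mono Set.Ioo_subset_Icc_self Set.Ioo_subset_Icc_self)
  rw [Measure.volume_eq_prod, setIntegral_prod _ hint,
    intervalIntegral.integral_of_le hR, integral_Ioc_eq_integral_Ioo]
  refine setIntegral_congr_fun measurableSet_Ioo fun s _ => ?_
  simp only
  rw [integral_const_mul, Real.circleAverage_eq_integral_add (-Real.pi)]
  congr 1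
  rw [intervalIntegral.integral_comp_add_right (fun t => g (circleMap c s t)),
    ← integral_Ioc_eq_integral_Ioo, ← intervalIntegral.integral_of_le (by linarith [Real.pi_pos])]
  rw [smul_eq_mul, ← mul_assoc, mul_inv_cancel₀ (by positivity), one_mul]
  congr 1 <;> ring

/-- The Laplacian of a function on `ℂ`, through its second Fréchet derivative. -/
noncomputable def complexLap (u : ℂ → ℝ) (z : ℂ) : ℝ :=
  fderiv ℝ (fderiv ℝ u) z 1 1 + fderiv ℝ (fderiv ℝ u) z Complex.I Complex.I

/-- The Laplacian is the trace of the Hessian in any rotated frame. -/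
theorem hessian_add_hessian_mul_I (u : ℂ → ℝ) (z v : ℂ) :
    fderiv ℝ (fderiv ℝ u) z v v + fderiv ℝ (fderiv ℝ u) z (v * Complex.I) (v * Complex.I) =
      ‖v‖ ^ 2 * complexLap u z := by
  have hv : v = v.re • (1 : ℂ) + v.im • Complex.I := by
    apply Complex.ext <;> simp
  have hw : v * Complex.I = v.re • Complex.I - v.im • (1 : ℂ) := by
    apply Complex.ext <;> simp
  rw [hw]
  have hn : ‖v‖ ^ 2 = v.re ^ 2 + v.im ^ 2 := by
    rw [← Complex.normSq_eq_norm_sq, Complex.normSq_apply]; ring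
  rw [hn, complexLap]
  generalize fderiv ℝ (fderiv ℝ u) z = B at *
  have : B v v = B (v.re • (1 : ℂ) + v.im • Complex.I) (v.re • (1 : ℂ) + v.im • Complex.I) := by
    rw [← hv]
  rw [this]
  simp only [map_add, map_sub, map_smul, add_apply,
    sub_apply, smul_apply, smul_eq_mul]
  ring

theorem ContDiff.continuous_complexLap {u : ℂ → ℝ} (hu : ContDiff ℝ 2 u) :
    Continuous (complexLap u) := by
  have h : Continuous (fderiv ℝ (fderiv ℝ u)) :=
    (hu.fderiv_right (m := 1) (by norm_num)).continuous_fderiv one_ne_zero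
  unfold complexLap
  fun_prop

/-- The mass of the measure `-Δu / 2π` in the disc of center `c` and radius `r`. -/
noncomputable def curvatureMass (u : ℂ → ℝ) (c : ℂ) (r : ℝ) : ℝ :=
  -∫ t in (0 : ℝ)..r, t * Real.circleAverage (complexLap u) c t

theorem curvatureMass_eq_setIntegral {u : ℂ → ℝ} (hu : ContDiff ℝ 2 u) (c : ℂ) {r : ℝ}
    (hr : 0 ≤ r) :
    curvatureMass u c r = (2 * Real.pi)⁻¹ * ∫ z in ball c r, -complexLap u z := by
  rw [integral_neg, setIntegral_ball_eq_circleAverage hu.continuous_complexLap c hr,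
    curvatureMass, mul_neg, ← intervalIntegral.integral_const_mul]
  congr 2 with t
  field_simp

/-- The mean over the unit circle of the radial derivative of `u`. -/
noncomputable def radialFlux (u : ℂ → ℝ) (c : ℂ) (r : ℝ) : ℝ :=
  ∫ θ in (0 : ℝ)..2 * Real.pi, fderiv ℝ u (circleMap c r θ) (circleMap 0 1 θ)

theorem ContDiff.continuous_radialFlux {u : ℂ → ℝ} (hu : ContDiff ℝ 2 u) (c : ℂ) :
    Continuous (radialFlux u c) := by
  have h : Continuous (fderiv ℝ u) := hu.continuous_fderiv two_ne_zero
  apply intervalIntegral.continuous_parametric_intervalIntegral_of_continuous'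
  simp only [Function.uncurry_def]
  unfold circleMap
  fun_prop

theorem hasDerivAt_circleMap_radius (c : ℂ) (θ r : ℝ) :
    HasDerivAt (fun r : ℝ => circleMap c r θ) (circleMap 0 1 θ) r := by
  unfold circleMap
  simpa using ((Complex.ofRealCLM.hasDerivAt (x := r)).mul_const
    (Complex.exp (θ * Complex.I))).const_add c

theorem circleAverage_sub_center {u : ℂ → ℝ} (hu : ContDiff ℝ 2 u) (c : ℂ) (r : ℝ) :
    Real.circleAverage u c r - u c = (2 * Real.pi)⁻¹ * ∫ s in (0 : ℝ)..r, radialFlux u c s := by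
  have h : Continuous (fderiv ℝ u) := hu.continuous_fderiv two_ne_zero
  have hF : Continuous fun p : ℝ × ℝ => fderiv ℝ u (circleMap c p.1 p.2) (circleMap 0 1 p.2) := by
    unfold circleMap; fun_prop
  have key : ∀ θ : ℝ, ∫ s in (0 : ℝ)..r, fderiv ℝ u (circleMap c s θ) (circleMap 0 1 θ) =
      u (circleMap c r θ) - u c := by
    intro θ
    have hder : ∀ s, HasDerivAt (fun s => u (circleMap c s θ))
        (fderiv ℝ u (circleMap c s θ) (circleMap 0 1 θ)) s := fun s =>
      ((hu.differentiable two_ne_zero _).hasFDerivAt).comp_hasDerivAt s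
        (hasDerivAt_circleMap_radius c θ s)
    rw [intervalIntegral.integral_eq_sub_of_hasDerivAt (fun s _ => hder s)
      ((hF.comp (Continuous.prodMk continuous_id continuous_const)).intervalIntegrable _ _)]
    simp [circleMap]
  unfold radialFlux
  rw [intervalIntegral_intervalIntegral_swap]
  · simp_rw [key]
    rw [intervalIntegral.integral_sub _ intervalIntegrable_const]
    · rw [Real.circleAverage_def, mul_sub, smul_eq_mul, intervalIntegral.integral_const,
        smul_eq_mul,
        sub_zero, ← mul_assoc, inv_mul_cancel₀ (by positivity), one_mul]
    · exact (hu.continuous.comp (continuous_circleMap c r)).intervalIntegrable _ _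
  · exact (hF.continuousOn.integrableOn_compact (isCompact_uIcc.prod isCompact_uIcc)).mono_set
      (Set.prod_mono Set.uIoc_subset_uIcc Set.uIoc_subset_uIcc)

theorem mul_radialFlux {u : ℂ → ℝ} (hu : ContDiff ℝ 2 u) (c : ℂ) (r : ℝ) :
    r * radialFlux u c r = -(2 * Real.pi * curvatureMass u c r) := by
  have h : Continuous (fderiv ℝ u) := hu.continuous_fderiv two_ne_zero
  have hd : Differentiable ℝ (fderiv ℝ u) :=
    (hu.fderiv_right (m := 1) (by norm_num)).differentiable one_ne_zero
  have h2 : Continuous (fderiv ℝ (fderiv ℝ u)) :=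
    (hu.fderiv_right (m := 1) (by norm_num)).continuous_fderiv one_ne_zero
  set F : ℝ → ℝ → ℝ := fun s θ => fderiv ℝ u (circleMap c s θ) (circleMap 0 1 θ) with hFdef
  set H : ℝ → ℝ → ℝ := fun s θ =>
    fderiv ℝ (fderiv ℝ u) (circleMap c s θ) (circleMap 0 1 θ) (circleMap 0 1 θ) with hHdef
  set T : ℝ → ℝ → ℝ := fun s θ => s * fderiv ℝ (fderiv ℝ u) (circleMap c s θ)
    (circleMap 0 1 θ * Complex.I) (circleMap 0 1 θ * Complex.I) - F s θ with hTdef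
  have hF : Continuous (Function.uncurry F) := by
    simp only [hFdef, Function.uncurry_def, circleMap]; fun_prop
  have hH : Continuous (Function.uncurry H) := by
    simp only [hHdef, Function.uncurry_def, circleMap]; fun_prop
  have hT : Continuous (Function.uncurry T) := by
    have : Continuous fun p : ℝ × ℝ => F p.1 p.2 := hF
    simp only [hTdef, Function.uncurry_def]
    unfold circleMap
    fun_prop
  have hL : Continuous (complexLap u) := hu.continuous_complexLap
  have key : ∀ θ : ℝ, ∫ s in (0 : ℝ)..r, (F s θ + s * H s θ) = r * F r θ := by
    intro θ
    have hder : ∀ s, HasDerivAt (fun s => s * F s θ) (F s θ + s * H s θ) s := by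
      intro s
      have h1 := ((hd (circleMap c s θ)).hasFDerivAt).comp_hasDerivAt s
        (hasDerivAt_circleMap_radius c θ s)
      have h3 := h1.clm_apply (hasDerivAt_const s (circleMap 0 1 θ))
      refine ((hasDerivAt_id s).mul h3).congr_deriv ?_
      simp [hFdef, hHdef]
    have h1 : Continuous fun s => F s θ :=
      hF.comp (Continuous.prodMk continuous_id continuous_const)
    have h3 : Continuous fun s => H s θ :=
      hH.comp (Continuous.prodMk continuous_id continuous_const)
    rw [intervalIntegral.integral_eq_sub_of_hasDerivAt (fun s _ => hder s)
      ((h1.add (continuous_id.mul h3)).intervalIntegrable _ _)]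
    simp
  have tang : ∀ s : ℝ, ∫ θ in (0 : ℝ)..2 * Real.pi, T s θ = 0 := by
    intro s
    have hder : ∀ θ, HasDerivAt
        (fun θ => fderiv ℝ u (circleMap c s θ) (circleMap 0 1 θ * Complex.I)) (T s θ) θ := by
      intro θ
      have h1 := ((hd (circleMap c s θ)).hasFDerivAt).comp_hasDerivAt θ (hasDerivAt_circleMap c s θ)
      have h3 := h1.clm_apply ((hasDerivAt_circleMap 0 1 θ).mul_const Complex.I)
      refine h3.congr_deriv ?_
      have e1 : circleMap 0 s θ * Complex.I = s • (circleMap 0 1 θ * Complex.I) := by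
        simp [circleMap]; ring
      have e2 : circleMap 0 1 θ * Complex.I * Complex.I = -circleMap 0 1 θ := by
        rw [mul_assoc, Complex.I_mul_I]; ring
      simp only [hTdef, hFdef, e1, e2, map_smul, map_neg, smul_apply, smul_eq_mul, Function.comp]
      ring
    rw [intervalIntegral.integral_eq_sub_of_hasDerivAt (fun θ _ => hder θ)
      ((hT.comp (Continuous.prodMk continuous_const continuous_id)).intervalIntegrable _ _)]
    simp [circleMap]
  have split : ∀ s θ : ℝ, F s θ + s * H s θ = s * complexLap u (circleMap c s θ) - T s θ := by
    intro s θ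
    have := hessian_add_hessian_mul_I u (circleMap c s θ) (circleMap 0 1 θ)
    rw [norm_circleMap_zero, abs_one, one_pow, one_mul] at this
    simp only [hTdef, hHdef, ← this]
    ring
  have hG : Continuous fun p : ℝ × ℝ => F p.2 p.1 + p.2 * H p.2 p.1 := by
    have h1 : Continuous fun p : ℝ × ℝ => F p.2 p.1 := hF.comp continuous_swap
    have h3 : Continuous fun p : ℝ × ℝ => H p.2 p.1 := hH.comp continuous_swap
    fun_prop
  calc r * radialFlux u c r
      = ∫ θ in (0 : ℝ)..2 * Real.pi, ∫ s in (0 : ℝ)..r, (F s θ + s * H s θ) := by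
        simp_rw [key]; rw [intervalIntegral.integral_const_mul]; rfl
    _ = ∫ s in (0 : ℝ)..r, ∫ θ in (0 : ℝ)..2 * Real.pi, (F s θ + s * H s θ) := by
        refine intervalIntegral_intervalIntegral_swap ?_
        exact (hG.continuousOn.integrableOn_compact (isCompact_uIcc.prod isCompact_uIcc)).mono_set
          (Set.prod_mono Set.uIoc_subset_uIcc Set.uIoc_subset_uIcc)
    _ = ∫ s in (0 : ℝ)..r, 2 * Real.pi * (s * Real.circleAverage (complexLap u) c s) := by
        congr 1 with s
        simp_rw [split]
        rw [intervalIntegral.integral_sub, tang, sub_zero, intervalIntegral.integral_const_mul,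
          Real.circleAverage_def, smul_eq_mul]
        · field_simp
        · exact (continuous_const.mul (hL.comp (continuous_circleMap c s))).intervalIntegrable _ _
        · exact (hT.comp (Continuous.prodMk continuous_const continuous_id)).intervalIntegrable _ _
    _ = _ := by
        rw [intervalIntegral.integral_const_mul, curvatureMass]; ring

/-- The circle averages of `u` have derivative `-μ(B(c, r)) / r` where `μ = -Δu / 2π`. -/
theorem hasDerivAt_circleAverage {u : ℂ → ℝ} (hu : ContDiff ℝ 2 u) (c : ℂ) {r : ℝ} (hr : 0 < r) :
    HasDerivAt (Real.circleAverage u c) (-(curvatureMass u c r / r)) r := by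
  have h1 : Real.circleAverage u c =
      fun r => (2 * Real.pi)⁻¹ * (∫ s in (0 : ℝ)..r, radialFlux u c s) + u c := by
    ext r; linarith [circleAverage_sub_center hu c r]
  have hc := hu.continuous_radialFlux c
  have h2 : HasDerivAt (fun r => ∫ s in (0 : ℝ)..r, radialFlux u c s) (radialFlux u c r) r :=
    intervalIntegral.integral_hasDerivAt_right (hc.intervalIntegrable _ _)
      (hc.stronglyMeasurableAtFilter _ _) hc.continuousAt
  rw [h1]
  refine ((h2.const_mul (2 * Real.pi)⁻¹).add_const (u c)).congr_deriv ?_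
  have := mul_radialFlux hu c r
  have hp := Real.pi_pos
  field_simp
  linarith

/-- The sum of `q` over the vertices of the square of center `z` with a vertex at `z + h`. -/
noncomputable def squareSum (q : ℂ → ℝ) (z h : ℂ) : ℝ :=
  q (z + h) + q (z + Complex.I * h) + q (z - h) + q (z - Complex.I * h)

/-- A discrete form of superharmonicity: near `z₀`, the mean of `q` over the vertices of a small
square exceeds the value at the center by an arbitrarily small multiple of the squared size. -/
def SquareSuperharmonicAt (q : ℂ → ℝ) (z₀ : ℂ) : Prop :=
  ∀ η > 0, ∀ᶠ p : ℂ × ℂ in nhds (z₀, 0), squareSum q p.1 p.2 ≤ 4 * q p.1 + η * ‖p.2‖ ^ 2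

namespace SquareSuperharmonicAt

theorem add {q₁ q₂ : ℂ → ℝ} {z₀ : ℂ} (h₁ : SquareSuperharmonicAt q₁ z₀)
    (h₂ : SquareSuperharmonicAt q₂ z₀) : SquareSuperharmonicAt (fun z => q₁ z + q₂ z) z₀ := by
  intro η hη
  filter_upwards [h₁ (η / 2) (by positivity), h₂ (η / 2) (by positivity)] with p hp₁ hp₂
  simp only [squareSum] at *
  linarith

theorem const_mul {q : ℂ → ℝ} {z₀ : ℂ} (h : SquareSuperharmonicAt q z₀) {a : ℝ} (ha : 0 < a) :
    SquareSuperharmonicAt (fun z => a * q z) z₀ := by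
  intro η hη
  filter_upwards [h (η / a) (by positivity)] with p hp
  have := mul_le_mul_of_nonneg_left hp ha.le
  rw [mul_add, ← mul_assoc a (η / a), mul_div_cancel₀ _ ha.ne'] at this
  simp only [squareSum] at *
  linarith

theorem min {q₁ q₂ : ℂ → ℝ} {z₀ : ℂ} (h₁ : SquareSuperharmonicAt q₁ z₀)
    (h₂ : SquareSuperharmonicAt q₂ z₀) :
    SquareSuperharmonicAt (fun z => Min.min (q₁ z) (q₂ z)) z₀ := by
  intro η hη
  filter_upwards [h₁ η hη, h₂ η hη] with p hp₁ hp₂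
  simp only [squareSum] at *
  rcases le_total (q₁ p.1) (q₂ p.1) with h | h
  · rw [min_eq_left h]
    exact le_trans (by gcongr <;> exact min_le_left _ _) hp₁
  · rw [min_eq_right h]
    exact le_trans (by gcongr <;> exact min_le_right _ _) hp₂

theorem congr {q₁ q₂ : ℂ → ℝ} {z₀ : ℂ} (h : SquareSuperharmonicAt q₁ z₀)
    (he : q₁ =ᶠ[nhds z₀] q₂) : SquareSuperharmonicAt q₂ z₀ := by
  intro η hη
  have key : ∀ f : ℂ × ℂ → ℂ, Continuous f → f (z₀, 0) = z₀ →
      ∀ᶠ p in nhds (z₀, (0 : ℂ)), q₁ (f p) = q₂ (f p) := by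
    intro f hf h0
    have : Tendsto f (nhds (z₀, 0)) (nhds z₀) := by
      simpa [h0] using hf.tendsto (z₀, 0)
    exact this.eventually he
  filter_upwards [h η hη, key (fun p => p.1) (by fun_prop) (by simp),
    key (fun p => p.1 + p.2) (by fun_prop) (by simp),
    key (fun p => p.1 + Complex.I * p.2) (by fun_prop) (by simp),
    key (fun p => p.1 - p.2) (by fun_prop) (by simp),
    key (fun p => p.1 - Complex.I * p.2) (by fun_prop) (by simp)] with p hp e0 e1 e2 e3 e4
  simp only [squareSum] at *
  rw [← e0, ← e1, ← e2, ← e3, ← e4]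
  exact hp

end SquareSuperharmonicAt

theorem symmetric_difference_le {u : ℂ → ℝ} {z₀ : ℂ} (hu : ContDiffAt ℝ 2 u z₀) {η : ℝ}
    (hη : 0 < η) : ∀ᶠ p : ℂ × ℂ in nhds (z₀, 0),
      u (p.1 + p.2) + u (p.1 - p.2) ≤
        2 * u p.1 + (fderiv ℝ (fderiv ℝ u) z₀ p.2 p.2 + η * ‖p.2‖ ^ 2) := by
  have hd : HasStrictFDerivAt (fderiv ℝ u) (fderiv ℝ (fderiv ℝ u) z₀) z₀ :=
    (hu.fderiv_right (m := 1) (by norm_num)).hasStrictFDerivAt one_ne_zero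
  set B := fderiv ℝ (fderiv ℝ u) z₀ with hB
  have hs := hd.isLittleO.def (c := η) hη
  have hdiff : ∀ᶠ z in nhds z₀, DifferentiableAt ℝ u z := by
    filter_upwards [hu.eventually (by simp)] with z hz
    exact hz.differentiableAt two_ne_zero
  obtain ⟨ε₁, hε₁, H₁⟩ := Metric.eventually_nhds_iff.1 hs
  obtain ⟨ε₂, hε₂, H₂⟩ := Metric.eventually_nhds_iff.1 hdiff
  set ε := Min.min ε₁ ε₂
  have hε : 0 < ε := lt_min hε₁ hε₂
  rw [Metric.eventually_nhds_iff]
  refine ⟨ε / 2, by positivity, ?_⟩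
  rintro ⟨z, h⟩ hp
  rw [Prod.dist_eq, max_lt_iff] at hp
  simp only [dist_zero_right] at hp
  have hball : ∀ t ∈ Set.Icc (-1 : ℝ) 1, dist (z + t • h) z₀ < ε := by
    intro t ht
    calc dist (z + t • h) z₀ ≤ dist (z + t • h) z + dist z z₀ := dist_triangle _ _ _
      _ ≤ ‖h‖ + dist z z₀ := by
        gcongr
        rw [dist_eq_norm, add_sub_cancel_left, norm_smul]
        exact mul_le_of_le_one_left (norm_nonneg _) (abs_le.2 ht)
      _ < ε := by linarith
  have hder : ∀ t ∈ Set.Icc (-1 : ℝ) 1,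
      HasDerivAt (fun t : ℝ => u (z + t • h)) (fderiv ℝ u (z + t • h) h) t := by
    intro t ht
    have h1 : DifferentiableAt ℝ u (z + t • h) := H₂ ((hball t ht).trans_le (min_le_right _ _))
    have h2 : HasDerivAt (fun t : ℝ => z + t • h) h t := by
      simpa using ((hasDerivAt_id t).smul_const h).const_add z
    exact h1.hasFDerivAt.comp_hasDerivAt t h2
  set c := B h h + η * ‖h‖ ^ 2 with hc
  set Φ : ℝ → ℝ := fun t => u (z + t • h) + u (z + (-t) • h) - t ^ 2 * c with hΦ
  have hΦd : ∀ t ∈ Set.Icc (0 : ℝ) 1, HasDerivAt Φ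
      (fderiv ℝ u (z + t • h) h - fderiv ℝ u (z + (-t) • h) h - 2 * t * c) t := by
    intro t ht
    have h1 := hder t ⟨by linarith [ht.1], ht.2⟩
    have h2 := (hder (-t) ⟨by linarith [ht.2], by linarith [ht.1]⟩).comp t (hasDerivAt_neg t)
    refine ((h1.add h2).sub ((hasDerivAt_pow 2 t).mul_const c)).congr_deriv ?_
    simp
    ring
  have hanti : AntitoneOn Φ (Set.Icc 0 1) := by
    refine antitoneOn_of_deriv_nonpos (convex_Icc 0 1)
      (fun t ht => (hΦd t ht).continuousAt.continuousWithinAt)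
      (fun t ht => (hΦd t (interior_subset ht)).differentiableAt.differentiableWithinAt) ?_
    intro t ht
    have ht := interior_subset ht
    rw [(hΦd t ht).deriv]
    have hst := H₁ (y := (z + t • h, z + (-t) • h)) (by
      rw [Prod.dist_eq, max_lt_iff]
      exact ⟨(hball t ⟨by linarith [ht.1], ht.2⟩).trans_le (min_le_left _ _),
        (hball (-t) ⟨by linarith [ht.2], by linarith [ht.1]⟩).trans_le (min_le_left _ _)⟩)
    have e : z + t • h - (z + (-t) • h) = (2 * t) • h := by module
    simp only [e] at hst
    have h5 := (fderiv ℝ u (z + t • h) - fderiv ℝ u (z + (-t) • h) - B ((2 * t) • h)).le_opNorm h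
    have h6 := (Real.le_norm_self _).trans
      (h5.trans (mul_le_mul_of_nonneg_right hst (norm_nonneg h)))
    simp only [sub_apply, map_smul, smul_apply, smul_eq_mul, norm_smul, Real.norm_eq_abs,
      abs_mul, abs_two, abs_of_nonneg ht.1] at h6
    rw [hc]
    linarith
  have := hanti (Set.left_mem_Icc.2 zero_le_one) (Set.right_mem_Icc.2 zero_le_one) zero_le_one
  simp only [hΦ, one_smul, neg_smul, zero_smul, sub_zero, add_zero, one_pow,
    ← sub_eq_add_neg] at this
  simp only
  linarith

theorem ContDiffAt.squareSuperharmonicAt {u : ℂ → ℝ} {z₀ : ℂ} (hu : ContDiffAt ℝ 2 u z₀)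
    (hl : complexLap u z₀ ≤ 0) : SquareSuperharmonicAt u z₀ := by
  intro η hη
  have h1 := symmetric_difference_le hu (show 0 < η / 2 by positivity)
  have h2 : Tendsto (fun p : ℂ × ℂ => (p.1, p.2 * Complex.I)) (nhds (z₀, 0)) (nhds (z₀, 0)) := by
    have : Continuous fun p : ℂ × ℂ => (p.1, p.2 * Complex.I) := by fun_prop
    simpa using this.tendsto (z₀, 0)
  filter_upwards [h1, h2.eventually h1] with p hp hq
  have h3 := hessian_add_hessian_mul_I u z₀ p.2
  have h4 : ‖p.2‖ ^ 2 * complexLap u z₀ ≤ 0 := mul_nonpos_of_nonneg_of_nonpos (by positivity) hl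
  simp only [norm_mul, Complex.norm_I, mul_one] at hq
  rw [squareSum, mul_comm Complex.I]
  linarith

theorem squareSuperharmonicAt_const (a : ℝ) (z₀ : ℂ) :
    SquareSuperharmonicAt (fun _ => a) z₀ := by
  refine ContDiffAt.squareSuperharmonicAt contDiffAt_const ?_
  simp [complexLap]

theorem squareSuperharmonicAt_const_mul_log (a : ℝ) {o z₀ : ℂ} (h : z₀ ≠ o) :
    SquareSuperharmonicAt (fun z => a * Real.log ‖z - o‖) z₀ := by
  have hh : InnerProductSpace.HarmonicAt (fun z => a * Real.log ‖z - o‖) z₀ := by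
    have : AnalyticAt ℂ (fun z : ℂ => z - o) z₀ := by fun_prop
    exact (this.harmonicAt_log_norm (sub_ne_zero.2 h)).const_smul (c := a)
  refine hh.1.squareSuperharmonicAt (le_of_eq ?_)
  have := hh.2.eq_of_nhds
  rw [InnerProductSpace.laplacian_eq_iteratedFDeriv_complexPlane] at this
  simpa [iteratedFDeriv_two_apply, complexLap] using this

/-- The minimum principle. -/
theorem le_of_squareSuperharmonicAt {q : ℂ → ℝ} {K : Set ℂ} {m : ℝ} (hK : IsCompact K)
    (hc : ContinuousOn q K) (hq : ∀ z ∈ interior K, SquareSuperharmonicAt q z)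
    (hm : ∀ z ∈ K, z ∉ interior K → m ≤ q z) : ∀ z ∈ K, m ≤ q z := by
  intro z₁ hz₁
  by_contra! hlt
  obtain ⟨R, hR⟩ := hK.isBounded.exists_norm_le
  set η := (m - q z₁) / (2 * (R ^ 2 + 1)) with hη
  have hηpos : 0 < η := div_pos (by linarith) (by positivity)
  have hηR : η * (2 * (R ^ 2 + 1)) = m - q z₁ := div_mul_cancel₀ _ (by positivity)
  obtain ⟨z₂, hz₂, hmin⟩ := hK.exists_isMinOn (f := fun z => q z - η * ‖z‖ ^ 2) ⟨z₁, hz₁⟩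
    (hc.sub (by fun_prop))
  have h1 : q z₂ - η * ‖z₂‖ ^ 2 ≤ q z₁ - η * ‖z₁‖ ^ 2 := hmin hz₁
  have hsq : ‖z₂‖ ^ 2 ≤ R ^ 2 := by gcongr; exact hR z₂ hz₂
  have hint : z₂ ∈ interior K := by
    by_contra hni
    have := hm z₂ hz₂ hni
    nlinarith [mul_le_mul_of_nonneg_left hsq hηpos.le, mul_nonneg hηpos.le (sq_nonneg ‖z₁‖)]
  have hev : ∀ᶠ h : ℂ in nhds 0, squareSum q z₂ h ≤ 4 * q z₂ + η * ‖h‖ ^ 2 := by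
    have : Tendsto (fun h : ℂ => (z₂, h)) (nhds 0) (nhds (z₂, 0)) :=
      (Continuous.prodMk continuous_const continuous_id).tendsto 0
    exact this.eventually (hq z₂ hint η hηpos)
  have hev2 : ∀ᶠ h : ℂ in nhds 0, ∀ a : ℂ, ‖a‖ = 1 → z₂ + a * h ∈ K := by
    obtain ⟨ε, hε, hb⟩ := Metric.isOpen_iff.1 isOpen_interior z₂ hint
    filter_upwards [Metric.ball_mem_nhds (0 : ℂ) hε] with h hh a ha
    refine interior_subset (hb ?_)
    simpa [ha] using hh
  obtain ⟨h, ⟨h2, h3⟩, h0⟩ := (((hev.and hev2).filter_mono nhdsWithin_le_nhds).and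
    (self_mem_nhdsWithin (a := (0 : ℂ)) (s := {0}ᶜ))).exists
  have f1 := hmin (h3 1 (by simp))
  have f2 := hmin (h3 Complex.I (by simp))
  have f3 := hmin (h3 (-1) (by simp))
  have f4 := hmin (h3 (-Complex.I) (by simp))
  simp only [Set.mem_ofPred_eq, one_mul, neg_mul, ← sub_eq_add_neg] at f1 f2 f3 f4
  have p1 := parallelogram_law_with_norm ℝ z₂ h
  have p2 := parallelogram_law_with_norm ℝ z₂ (Complex.I * h)
  rw [norm_mul, Complex.norm_I, one_mul] at p2
  have hpos : 0 < ‖h‖ ^ 2 := by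
    have : 0 < ‖h‖ := norm_pos_iff.2 h0
    positivity
  rw [squareSum] at h2
  nlinarith [mul_pos hηpos hpos]

theorem circleAverage_norm_eq (q : ℂ → ℝ) (c y : ℂ) :
    Real.circleAverage q c ‖y‖ =
      (2 * Real.pi)⁻¹ * ∫ θ in (0 : ℝ)..2 * Real.pi, q (c + circleMap 0 1 θ * y) := by
  rw [Real.circleAverage_eq_integral_add y.arg, smul_eq_mul]
  congr 2 with θ
  congr 1
  rw [circleMap, circleMap]
  push_cast
  rw [add_mul, Complex.exp_add]
  conv_rhs => rw [← Complex.norm_mul_exp_arg_mul_I y]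
  simp only [zero_add, one_mul]
  ring

/-- The mean value inequality. -/
theorem circleAverage_le_of_squareSuperharmonicAt {q : ℂ → ℝ} (hc : Continuous q)
    (hq : ∀ z, SquareSuperharmonicAt q z) (c : ℂ) {R : ℝ} (hR : 0 ≤ R) :
    Real.circleAverage q c R ≤ q c := by
  have hQeq := circleAverage_norm_eq q c
  set Q : ℂ → ℝ := fun y => Real.circleAverage q c ‖y‖ with hQ
  have hj : Continuous fun p : ℂ × ℝ => q (c + circleMap 0 1 p.2 * p.1) := by
    unfold circleMap; fun_prop
  have hQc : Continuous Q := by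
    have : Q = fun y => (2 * Real.pi)⁻¹ *
        ∫ θ in (0 : ℝ)..2 * Real.pi, q (c + circleMap 0 1 θ * y) := funext hQeq
    rw [this]
    exact continuous_const.mul
      (intervalIntegral.continuous_parametric_intervalIntegral_of_continuous' hj _ _)
  have hQs : ∀ y, SquareSuperharmonicAt Q y := by
    intro y₀ η hη
    have hev : ∀ᶠ p : ℂ × ℂ in nhds (y₀, 0), ∀ θ ∈ Set.Icc (0 : ℝ) (2 * Real.pi),
        squareSum q (c + circleMap 0 1 θ * p.1) (circleMap 0 1 θ * p.2) ≤
          4 * q (c + circleMap 0 1 θ * p.1) + η * ‖p.2‖ ^ 2 := by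
      refine isCompact_Icc.eventually_forall_of_forall_eventually fun θ _ => ?_
      have h1 : Continuous fun z : (ℂ × ℂ) × ℝ =>
          (c + circleMap 0 1 z.2 * z.1.1, circleMap 0 1 z.2 * z.1.2) := by
        unfold circleMap; fun_prop
      have h2 := (h1.tendsto ((y₀, 0), θ)).eventually (by
        simpa using hq (c + circleMap 0 1 θ * y₀) η hη)
      filter_upwards [h2] with z hz
      simpa using hz
    filter_upwards [hev] with p hp
    have hi : ∀ y, IntervalIntegrable (fun θ => q (c + circleMap 0 1 θ * y)) volume 0
        (2 * Real.pi) := fun y =>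
      (hj.comp (Continuous.prodMk continuous_const continuous_id)).intervalIntegrable _ _
    have hmono := intervalIntegral.integral_mono_on (μ := volume) Real.two_pi_pos.le
      ((((hi (p.1 + p.2)).add (hi (p.1 + Complex.I * p.2))).add (hi (p.1 - p.2))).add
        (hi (p.1 - Complex.I * p.2)))
      (((hi p.1).const_mul 4).add (intervalIntegrable_const (c := η * ‖p.2‖ ^ 2))) (fun θ hθ => by
        have := hp θ hθ
        simp only [squareSum] at this
        ring_nf at this ⊢
        exact this)
    rw [intervalIntegral.integral_add, intervalIntegral.integral_add,
      intervalIntegral.integral_add, intervalIntegral.integral_add,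
      intervalIntegral.integral_const_mul, intervalIntegral.integral_const] at hmono
    · rw [squareSum]
      simp only [hQ, hQeq]
      have := mul_le_mul_of_nonneg_left hmono (inv_nonneg.2 Real.two_pi_pos.le)
      rw [mul_add _ (4 * _), smul_eq_mul, sub_zero,
        inv_mul_cancel_left₀ Real.two_pi_pos.ne'] at this
      linarith
    all_goals
      first
      | exact hi _
      | exact (hi _).const_mul 4
      | exact intervalIntegrable_const
      | exact (hi _).add (hi _)
      | exact ((hi _).add (hi _)).add (hi _)
  have hmin := le_of_squareSuperharmonicAt (isCompact_closedBall (0 : ℂ) R) hQc.continuousOn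
    (fun z _ => hQs z) (m := Real.circleAverage q c R) (fun z hz hz' => by
      have h1 : ball (0 : ℂ) R ⊆ interior (closedBall (0 : ℂ) R) := ball_subset_interior_closedBall
      have h2 : ‖z‖ ≤ R := by simpa using hz
      have h3 : ¬ ‖z‖ < R := fun h => hz' (h1 (by simpa using h))
      rw [hQ]
      simp only
      rw [le_antisymm h2 (not_lt.1 h3)])
    0 (by simpa using hR)
  simpa [hQ] using hmin

theorem setIntegral_ball_le_of_circleAverage_le {q : ℂ → ℝ} (hc : Continuous q) {c : ℂ} {R a : ℝ}
    (hR : 0 ≤ R) (h : ∀ s ∈ Set.Icc 0 R, Real.circleAverage q c s ≤ a) :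
    ∫ z in ball c R, q z ≤ Real.pi * R ^ 2 * a := by
  rw [setIntegral_ball_eq_circleAverage hc c hR]
  have hA := Real.Continuous.circleAverage (c := c) hc
  calc ∫ s in (0 : ℝ)..R, s * (2 * Real.pi * Real.circleAverage q c s)
      ≤ ∫ s in (0 : ℝ)..R, s * (2 * Real.pi * a) := by
        refine intervalIntegral.integral_mono_on (μ := volume) hR ?_ ?_ fun s hs => ?_
        · exact (continuous_id.mul (continuous_const.mul hA)).intervalIntegrable _ _
        · exact (continuous_id.mul continuous_const).intervalIntegrable _ _
        · have := h s hs
          have := hs.1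
          have := Real.pi_pos
          gcongr
    _ = Real.pi * R ^ 2 * a := by
        rw [intervalIntegral.integral_mul_const, integral_id]; ring

/-- A logarithmic perturbation removing an isolated point. -/
theorem exists_squareSuperharmonic_truncation {q : ℂ → ℝ} (hc : Continuous q) {o : ℂ}
    (hq : ∀ z ≠ o, SquareSuperharmonicAt q z) {κ R : ℝ} (hκ : 0 < κ) (hR : 0 < R) (N : ℝ) :
    ∃ g : ℂ → ℝ, Continuous g ∧ (∀ z, SquareSuperharmonicAt g z) ∧ g o = N ∧
      ∀ z ≠ o, g z = min (q z - κ * Real.log (‖z - o‖ / R)) N := by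
  classical
  set g : ℂ → ℝ := fun z => if z = o then N else min (q z - κ * Real.log (‖z - o‖ / R)) N with hg
  have g0 : g o = N := by simp [hg]
  have g1 : ∀ z ≠ o, g z = min (q z - κ * Real.log (‖z - o‖ / R)) N := by
    intro z hz; simp [hg, hz]
  have e1 : ∀ z ≠ o, (fun z => min (q z + (-κ * Real.log ‖z - o‖ + κ * Real.log R)) N)
      =ᶠ[nhds z] g := by
    intro z hz
    filter_upwards [isOpen_ne.mem_nhds hz] with w hw
    rw [g1 w hw, Real.log_div (norm_ne_zero_iff.2 (sub_ne_zero.2 hw)) hR.ne']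
    congr 1; ring
  have e0 : (fun _ => N) =ᶠ[nhds o] g := by
    have h1 : Tendsto (fun z => ‖z - o‖ / R) (nhdsWithin o {o}ᶜ) (nhdsWithin 0 (Set.Ioi 0)) := by
      refine tendsto_nhdsWithin_iff.2 ⟨?_, ?_⟩
      · have : Continuous fun z => ‖z - o‖ / R := by fun_prop
        simpa using (this.tendsto o).mono_left nhdsWithin_le_nhds
      · filter_upwards [self_mem_nhdsWithin] with z hz
        have : 0 < ‖z - o‖ := norm_pos_iff.2 (sub_ne_zero.2 hz)
        exact div_pos this hR
    have h2 : Tendsto (fun z => q z + -κ * Real.log (‖z - o‖ / R)) (nhdsWithin o {o}ᶜ) atTop :=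
      ((hc.tendsto o).mono_left nhdsWithin_le_nhds).add_atTop
        ((Real.tendsto_log_nhdsGT_zero.comp h1).const_mul_atBot_of_neg (by linarith))
    have h3 := eventually_nhdsWithin_iff.1 (h2.eventually_ge_atTop N)
    filter_upwards [h3] with z hz
    by_cases hzo : z = o
    · rw [hzo, g0]
    · rw [g1 z hzo, min_eq_right]
      have := hz hzo
      linarith
  refine ⟨g, continuous_iff_continuousAt.2 fun z => ?_, fun z => ?_, g0, g1⟩
  · by_cases hz : z = o
    · rw [hz]; exact continuousAt_const.congr e0
    · refine ContinuousAt.congr ?_ (e1 z hz)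
      have : ContinuousAt (fun z => Real.log ‖z - o‖) z :=
        (by fun_prop : ContinuousAt (fun z => ‖z - o‖) z).log
          (norm_ne_zero_iff.2 (sub_ne_zero.2 hz))
      have := hc.continuousAt (x := z)
      fun_prop
  · by_cases hz : z = o
    · rw [hz]; exact (squareSuperharmonicAt_const N o).congr e0
    · refine SquareSuperharmonicAt.congr ?_ (e1 z hz)
      exact ((hq z hz).add ((squareSuperharmonicAt_const_mul_log (-κ) hz).add
        (squareSuperharmonicAt_const _ z))).min (squareSuperharmonicAt_const N z)

theorem le_of_forall_pos_add_mul_le {a b c : ℝ} (h : ∀ κ > 0, a ≤ b + κ * c) : a ≤ b := by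
  have : Tendsto (fun κ : ℝ => b + κ * c) (nhdsWithin 0 (Set.Ioi 0)) (nhds b) := by
    have : Continuous fun κ : ℝ => b + κ * c := by fun_prop
    simpa using (this.tendsto 0).mono_left nhdsWithin_le_nhds
  exact ge_of_tendsto this (by filter_upwards [self_mem_nhdsWithin] with κ hκ using h κ hκ)

/-- The minimum principle on a disc, with the center removed. -/
theorem le_of_squareSuperharmonicAt_punctured {q : ℂ → ℝ} (hc : Continuous q) {o : ℂ}
    (hq : ∀ z ≠ o, SquareSuperharmonicAt q z) {R m : ℝ} (hR : 0 < R)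
    (hm : ∀ z ∈ sphere o R, m ≤ q z) : ∀ z ∈ closedBall o R, m ≤ q z := by
  have off : ∀ z ∈ closedBall o R, z ≠ o → m ≤ q z := by
    intro z hz hzo
    refine le_of_forall_pos_add_mul_le (c := -Real.log (‖z - o‖ / R)) fun κ hκ => ?_
    obtain ⟨g, gc, gs, g0, g1⟩ := exists_squareSuperharmonic_truncation hc hq hκ hR m
    have := le_of_squareSuperharmonicAt (isCompact_closedBall o R) gc.continuousOn
      (fun z _ => gs z) (m := m) (fun w hw hw' => by
        have h2 : dist w o ≤ R := hw
        have h3 : ¬ dist w o < R := fun h => hw' (ball_subset_interior_closedBall h)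
        have h4 : dist w o = R := le_antisymm h2 (not_lt.1 h3)
        have h5 : w ≠ o := dist_pos.1 (by rw [h4]; exact hR)
        rw [g1 w h5, ← dist_eq_norm, h4, div_self hR.ne', Real.log_one, mul_zero, sub_zero]
        exact le_min (hm w h4) le_rfl) z hz
    rw [g1 z hzo] at this
    linarith [this.trans (min_le_left _ _)]
  intro z hz
  by_cases hzo : z = o
  · have h1 : ∀ᶠ w in nhdsWithin o {o}ᶜ, m ≤ q w := by
      filter_upwards [self_mem_nhdsWithin, nhdsWithin_le_nhds (closedBall_mem_nhds o hR)]
        with w hw hw' using off w hw' hw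
    rw [hzo]
    exact ge_of_tendsto ((hc.tendsto o).mono_left nhdsWithin_le_nhds) h1
  · exact off z hz hzo

theorem circleAverage_le_of_squareSuperharmonicAt_punctured {q : ℂ → ℝ} (hc : Continuous q) {o : ℂ}
    (hq : ∀ z ≠ o, SquareSuperharmonicAt q z) {c : ℂ} (hco : c ≠ o) {R : ℝ} (hR : 0 ≤ R) :
    Real.circleAverage q c R ≤ q c := by
  set R' := R + ‖c - o‖ with hR'
  have hpos : 0 < R' := by
    have : 0 < ‖c - o‖ := norm_pos_iff.2 (sub_ne_zero.2 hco)
    linarith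
  obtain ⟨N, hN⟩ := (isCompact_closedBall c R).bddAbove_image hc.continuousOn
  refine le_of_forall_pos_add_mul_le (c := -Real.log (‖c - o‖ / R')) fun κ hκ => ?_
  obtain ⟨g, gc, gs, g0, g1⟩ := exists_squareSuperharmonic_truncation hc hq hκ hpos N
  have hqg : ∀ z ∈ sphere c |R|, q z ≤ g z := by
    intro z hz
    rw [abs_of_nonneg hR] at hz
    have hqN : q z ≤ N := hN ⟨z, sphere_subset_closedBall hz, rfl⟩
    by_cases hzo : z = o
    · rw [hzo] at hqN ⊢; rwa [g0]
    · rw [g1 z hzo]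
      refine le_min ?_ hqN
      have : Real.log (‖z - o‖ / R') ≤ 0 := by
        refine Real.log_nonpos (by positivity) (div_le_one_of_le₀ ?_ hpos.le)
        have : ‖z - c‖ = R := by simpa [dist_eq_norm] using hz
        calc ‖z - o‖ ≤ ‖z - c‖ + ‖c - o‖ := norm_sub_le_norm_sub_add_norm_sub _ _ _
          _ = R' := by rw [this]
      nlinarith
  calc Real.circleAverage q c R ≤ Real.circleAverage g c R :=
        Real.circleAverage_mono hc.continuousOn.circleIntegrable'
          gc.continuousOn.circleIntegrable' hqg
    _ ≤ g c := circleAverage_le_of_squareSuperharmonicAt gc gs c hR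
    _ ≤ _ := by
      have := min_le_left (q c - κ * Real.log (‖c - o‖ / R')) N
      rw [g1 c hco]
      linarith

/-- The speed of a curve in the metric `e^{2u}|dz|²`. -/
noncomputable def conformalSpeed (u : ℂ → ℝ) (γ : ℝ → ℂ) (t : ℝ) : ℝ :=
  Real.exp (u (γ t)) * ‖deriv γ t‖

/-- A `C¹` curve which runs from `a` to `b` during the time interval `[0, 1]` and rests outside. -/
structure IsRestingPath (γ : ℝ → ℂ) (a b : ℂ) : Prop where
  contDiff : ContDiff ℝ 1 γ
  eq_left : ∀ t ≤ 0, γ t = a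
  eq_right : ∀ t, 1 ≤ t → γ t = b

/-- The distance of the metric `e^{2u}|dz|²`. -/
noncomputable def conformalDist (u : ℂ → ℝ) (a b : ℂ) : ℝ :=
  sInf {l | ∃ γ, IsRestingPath γ a b ∧ ∫ t in (0 : ℝ)..1, conformalSpeed u γ t = l}

theorem conformalSpeed_nonneg (u : ℂ → ℝ) (γ : ℝ → ℂ) (t : ℝ) : 0 ≤ conformalSpeed u γ t :=
  mul_nonneg (Real.exp_pos _).le (norm_nonneg _)

theorem continuous_conformalSpeed {u : ℂ → ℝ} (hu : Continuous u) {γ : ℝ → ℂ}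
    (hγ : ContDiff ℝ 1 γ) : Continuous (conformalSpeed u γ) := by
  have h1 := hγ.continuous
  have h2 : Continuous (deriv γ) := hγ.continuous_deriv le_rfl
  unfold conformalSpeed
  fun_prop

theorem integral_conformalSpeed_comp {u : ℂ → ℝ} (hu : Continuous u) {γ : ℝ → ℂ}
    (hγ : ContDiff ℝ 1 γ) {φ : ℝ → ℝ} {a b : ℝ} (hab : a ≤ b)
    (hφ : ∀ t ∈ Set.Icc a b, DifferentiableAt ℝ φ t) (hφ' : ContinuousOn (deriv φ) (Set.Icc a b))
    (hmono : ∀ t ∈ Set.Icc a b, 0 ≤ deriv φ t) :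
    ∫ t in a..b, conformalSpeed u (γ ∘ φ) t = ∫ t in φ a..φ b, conformalSpeed u γ t := by
  rw [← Set.uIcc_of_le hab] at hφ hφ' hmono
  rw [← intervalIntegral.integral_comp_mul_deriv (fun t ht => (hφ t ht).hasDerivAt) hφ'
    (continuous_conformalSpeed hu hγ)]
  refine intervalIntegral.integral_congr fun t ht => ?_
  have h1 : HasDerivAt (γ ∘ φ) (deriv φ t • deriv γ (φ t)) t :=
    (hγ.differentiable one_ne_zero (φ t)).hasDerivAt.scomp t (hφ t ht).hasDerivAt
  simp only [conformalSpeed, Function.comp, h1.deriv, norm_smul, Real.norm_eq_abs,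
    abs_of_nonneg (hmono t ht)]
  ring

theorem bddBelow_conformalLength (u : ℂ → ℝ) (a b : ℂ) :
    BddBelow {l | ∃ γ, IsRestingPath γ a b ∧ ∫ t in (0 : ℝ)..1, conformalSpeed u γ t = l} := by
  refine ⟨0, ?_⟩
  rintro _ ⟨γ, -, rfl⟩
  exact intervalIntegral.integral_nonneg zero_le_one fun t _ => conformalSpeed_nonneg u γ t

theorem conformalDist_nonneg (u : ℂ → ℝ) (a b : ℂ) : 0 ≤ conformalDist u a b := by
  refine Real.sInf_nonneg ?_
  rintro _ ⟨γ, -, rfl⟩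
  exact intervalIntegral.integral_nonneg zero_le_one fun t _ => conformalSpeed_nonneg u γ t

theorem exists_isRestingPath_of_contDiff {u : ℂ → ℝ} (hu : Continuous u) {γ : ℝ → ℂ}
    (hγ : ContDiff ℝ 1 γ) {a b : ℝ} (hab : a ≤ b) :
    ∃ γ', IsRestingPath γ' (γ a) (γ b) ∧
      ∫ t in (0 : ℝ)..1, conformalSpeed u γ' t = ∫ t in a..b, conformalSpeed u γ t := by
  set φ : ℝ → ℝ := fun t => a + (b - a) * Real.smoothTransition t with hφ
  have hst : ContDiff ℝ 1 Real.smoothTransition := Real.smoothTransition.contDiff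
  have hφc : ContDiff ℝ 1 φ := contDiff_const.add (contDiff_const.mul hst)
  have hmono : Monotone φ := fun s t hst' => by
    have := Real.smoothTransition.monotone hst'
    simp only [hφ]
    nlinarith
  have h0 : ∀ t ≤ 0, φ t = a := fun t ht => by
    simp [hφ, Real.smoothTransition.zero_of_nonpos ht]
  have h1 : ∀ t, 1 ≤ t → φ t = b := fun t ht => by
    simp [hφ, Real.smoothTransition.one_of_one_le ht]
  refine ⟨γ ∘ φ, ⟨hγ.comp hφc, fun t ht => by simp [h0 t ht], fun t ht => by simp [h1 t ht]⟩, ?_⟩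
  rw [integral_conformalSpeed_comp hu hγ zero_le_one
    (fun t _ => hφc.differentiable one_ne_zero t) (hφc.continuous_deriv le_rfl).continuousOn
    (fun t _ => hmono.deriv_nonneg), h0 0 le_rfl, h1 1 le_rfl]

theorem conformalDist_le_integral {u : ℂ → ℝ} (hu : Continuous u) {γ : ℝ → ℂ}
    (hγ : ContDiff ℝ 1 γ) {a b : ℝ} (hab : a ≤ b) :
    conformalDist u (γ a) (γ b) ≤ ∫ t in a..b, conformalSpeed u γ t := by
  obtain ⟨γ', h1, h2⟩ := exists_isRestingPath_of_contDiff hu hγ hab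
  exact csInf_le (bddBelow_conformalLength u _ _) ⟨γ', h1, h2⟩

theorem exists_isRestingPath_lt {u : ℂ → ℝ} (hu : Continuous u) {a b : ℂ} {l : ℝ}
    (h : conformalDist u a b < l) :
    ∃ γ, IsRestingPath γ a b ∧ ∫ t in (0 : ℝ)..1, conformalSpeed u γ t < l := by
  have hγ : ContDiff ℝ 1 fun t : ℝ => a + t • (b - a) := by fun_prop
  obtain ⟨γ', h1, -⟩ := exists_isRestingPath_of_contDiff hu hγ zero_le_one
  simp only [zero_smul, add_zero, one_smul, add_sub_cancel] at h1
  obtain ⟨_, ⟨γ, hγ, rfl⟩, hl⟩ := exists_lt_of_csInf_lt (by exact ⟨_, γ', h1, rfl⟩) h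
  exact ⟨γ, hγ, hl⟩

theorem conformalDist_le_mul_norm {u : ℂ → ℝ} (hu : Continuous u) {a b : ℂ} {M : ℝ}
    (hM : ∀ z ∈ segment ℝ a b, Real.exp (u z) ≤ M) : conformalDist u a b ≤ M * ‖b - a‖ := by
  have hγ : ContDiff ℝ 1 fun t : ℝ => a + t • (b - a) := by fun_prop
  have h := conformalDist_le_integral hu hγ zero_le_one
  simp only [zero_smul, add_zero, one_smul, add_sub_cancel] at h
  refine h.trans ?_
  calc ∫ t in (0 : ℝ)..1, conformalSpeed u (fun t : ℝ => a + t • (b - a)) t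
      ≤ ∫ t in (0 : ℝ)..1, M * ‖b - a‖ := by
        refine intervalIntegral.integral_mono_on zero_le_one
          ((continuous_conformalSpeed hu hγ).intervalIntegrable _ _) intervalIntegrable_const ?_
        intro t ht
        have h2 : HasDerivAt (fun t : ℝ => a + t • (b - a)) (b - a) t := by
          simpa using ((hasDerivAt_id t).smul_const (b - a)).const_add a
        rw [conformalSpeed, h2.deriv]
        gcongr
        exact hM _ (segment_eq_image' ℝ a b ▸ ⟨t, ht, rfl⟩)
    _ = M * ‖b - a‖ := by simp

theorem conformalDist_self {u : ℂ → ℝ} (hu : Continuous u) (a : ℂ) : conformalDist u a a = 0 := by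
  refine le_antisymm ?_ (conformalDist_nonneg u a a)
  simpa using conformalDist_le_mul_norm hu (a := a) (b := a) (M := Real.exp (u a))
    (by simp [segment_same])

theorem conformalDist_comm {u : ℂ → ℝ} (hu : Continuous u) (a b : ℂ) :
    conformalDist u a b = conformalDist u b a := by
  have key : ∀ a b : ℂ, conformalDist u b a ≤ conformalDist u a b := by
    intro a b
    refine le_of_forall_gt fun l hl => ?_
    obtain ⟨γ, hγ, hlt⟩ := exists_isRestingPath_lt hu hl
    have h1 : ContDiff ℝ 1 fun t : ℝ => γ (1 - t) := hγ.contDiff.comp (by fun_prop)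
    have h2 := conformalDist_le_integral hu h1 zero_le_one
    simp only [sub_zero, sub_self, hγ.eq_left 0 le_rfl, hγ.eq_right 1 le_rfl] at h2
    refine h2.trans_lt (lt_of_eq_of_lt ?_ hlt)
    have h3 : ∀ t, conformalSpeed u (fun t => γ (1 - t)) t = conformalSpeed u γ (1 - t) := by
      intro t
      rw [conformalSpeed, conformalSpeed, deriv_comp_const_sub, norm_neg]
    simp_rw [h3]
    rw [intervalIntegral.integral_comp_sub_left]
    simp
  exact le_antisymm (key b a) (key a b)

theorem conformalDist_triangle {u : ℂ → ℝ} (hu : Continuous u) (a b c : ℂ) :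
    conformalDist u a c ≤ conformalDist u a b + conformalDist u b c := by
  refine le_of_forall_pos_lt_add fun ε hε => ?_
  obtain ⟨γ₁, h₁, l₁⟩ := exists_isRestingPath_lt hu
    (show conformalDist u a b < conformalDist u a b + ε / 2 by linarith)
  obtain ⟨γ₂, h₂, l₂⟩ := exists_isRestingPath_lt hu
    (show conformalDist u b c < conformalDist u b c + ε / 2 by linarith)
  set γ : ℝ → ℂ := fun t => γ₁ t + γ₂ (t - 1) - b with hγ
  have hγc : ContDiff ℝ 1 γ :=
    (h₁.contDiff.add (h₂.contDiff.comp (by fun_prop : ContDiff ℝ 1 fun t : ℝ => t - 1))).sub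
      contDiff_const
  have h := conformalDist_le_integral hu hγc (zero_le_two (α := ℝ))
  have e0 : γ 0 = a := by
    simp [hγ, h₁.eq_left 0 le_rfl, h₂.eq_left (-1) (by norm_num)]
  have e2 : γ 2 = c := by
    simp [hγ, h₁.eq_right 2 (by norm_num), h₂.eq_right (2 - 1) (by norm_num)]
  rw [e0, e2] at h
  have hcont := continuous_conformalSpeed hu hγc
  rw [← intervalIntegral.integral_add_adjacent_intervals (b := 1)
    (hcont.intervalIntegrable _ _) (hcont.intervalIntegrable _ _)] at h
  have i1 : ∫ t in (0 : ℝ)..1, conformalSpeed u γ t =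
      ∫ t in (0 : ℝ)..1, conformalSpeed u γ₁ t := by
    rw [intervalIntegral.integral_of_le zero_le_one, integral_Ioc_eq_integral_Ioo,
      intervalIntegral.integral_of_le zero_le_one, integral_Ioc_eq_integral_Ioo]
    refine setIntegral_congr_fun measurableSet_Ioo fun t ht => ?_
    have he : γ =ᶠ[nhds t] γ₁ := by
      filter_upwards [Iio_mem_nhds ht.2] with s hs
      simp [hγ, h₂.eq_left (s - 1) (by linarith [Set.mem_Iio.1 hs])]
    simp only [conformalSpeed, he.deriv_eq, he.eq_of_nhds]
  have i2 : ∫ t in (1 : ℝ)..2, conformalSpeed u γ t =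
      ∫ t in (0 : ℝ)..1, conformalSpeed u γ₂ t := by
    have : ∫ t in (1 : ℝ)..2, conformalSpeed u γ₂ (t - 1) =
        ∫ t in (0 : ℝ)..1, conformalSpeed u γ₂ t := by
      rw [intervalIntegral.integral_comp_sub_right]; norm_num
    rw [← this, intervalIntegral.integral_of_le one_le_two, integral_Ioc_eq_integral_Ioo,
      intervalIntegral.integral_of_le one_le_two, integral_Ioc_eq_integral_Ioo]
    refine setIntegral_congr_fun measurableSet_Ioo fun t ht => ?_
    have he : γ =ᶠ[nhds t] fun t => γ₂ (t - 1) := by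
      filter_upwards [Ioi_mem_nhds ht.1] with s hs
      simp [hγ, h₁.eq_right s (le_of_lt hs)]
    simp only [conformalSpeed, he.deriv_eq, he.eq_of_nhds, deriv_comp_sub_const]
  rw [i1, i2] at h
  linarith

/-- A curve which leaves a disc has length at least that of its part inside the disc. -/
theorem mul_le_integral_conformalSpeed {u : ℂ → ℝ} (hu : Continuous u) {γ : ℝ → ℂ}
    (hγ : ContDiff ℝ 1 γ) {ρ M t₀ : ℝ} (ht₀ : 0 ≤ t₀) (hM : 0 ≤ M)
    (hlow : ∀ z ∈ closedBall (γ 0) ρ, M ≤ Real.exp (u z)) (hfar : ρ ≤ ‖γ t₀ - γ 0‖) :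
    M * ρ ≤ ∫ t in (0 : ℝ)..t₀, conformalSpeed u γ t := by
  have hcont := continuous_conformalSpeed hu hγ
  have hclosed : IsCompact (Set.Icc 0 t₀ ∩ {t | ρ ≤ ‖γ t - γ 0‖}) :=
    isCompact_Icc.inter_right
      (isClosed_le continuous_const (hγ.continuous.sub continuous_const).norm)
  obtain ⟨t₁, ⟨⟨h0, h1⟩, h2⟩, hleast⟩ := hclosed.exists_isLeast ⟨t₀, ⟨ht₀, le_rfl⟩, hfar⟩
  have hd : Continuous (deriv γ) := hγ.continuous_deriv le_rfl
  have hin : ∀ t ∈ Set.Ioo 0 t₁, ‖γ t - γ 0‖ ≤ ρ := by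
    intro t ht
    by_contra! hgt
    exact absurd (hleast ⟨⟨ht.1.le, ht.2.le.trans h1⟩, hgt.le⟩) (not_le.2 ht.2)
  calc M * ρ ≤ M * ‖γ t₁ - γ 0‖ := by gcongr; exact h2
    _ = M * ‖∫ t in (0 : ℝ)..t₁, deriv γ t‖ := by
      rw [intervalIntegral.integral_deriv_eq_sub
        (fun t _ => hγ.differentiable one_ne_zero t) (hd.intervalIntegrable _ _)]
    _ ≤ M * ∫ t in (0 : ℝ)..t₁, ‖deriv γ t‖ := by
      gcongr; exact intervalIntegral.norm_integral_le_integral_norm h0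
    _ = ∫ t in (0 : ℝ)..t₁, M * ‖deriv γ t‖ := by rw [intervalIntegral.integral_const_mul]
    _ ≤ ∫ t in (0 : ℝ)..t₁, conformalSpeed u γ t := by
      refine intervalIntegral.integral_mono_on_of_le_Ioo h0
        ((continuous_const.mul hd.norm).intervalIntegrable _ _) (hcont.intervalIntegrable _ _) ?_
      intro t ht
      rw [conformalSpeed]
      gcongr
      exact hlow _ (by simpa [dist_eq_norm] using hin t ht)
    _ ≤ ∫ t in (0 : ℝ)..t₀, conformalSpeed u γ t := by
      refine intervalIntegral.integral_mono_interval le_rfl h0 h1 ?_ (hcont.intervalIntegrable _ _)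
      exact ae_of_all _ fun t => conformalSpeed_nonneg u γ t

theorem mul_le_conformalDist {u : ℂ → ℝ} (hu : Continuous u) {a b : ℂ} {ρ M : ℝ}
    (hM : 0 ≤ M) (hlow : ∀ z ∈ closedBall a ρ, M ≤ Real.exp (u z)) (hfar : ρ ≤ ‖b - a‖) :
    M * ρ ≤ conformalDist u a b := by
  refine le_of_forall_gt fun l hl => ?_
  obtain ⟨γ, hγ, hlt⟩ := exists_isRestingPath_lt hu hl
  refine lt_of_le_of_lt (mul_le_integral_conformalSpeed hu hγ.contDiff zero_le_one hM ?_ ?_) hlt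
  · rwa [hγ.eq_left 0 le_rfl]
  · rwa [hγ.eq_left 0 le_rfl, hγ.eq_right 1 le_rfl]

theorem tendsto_conformalDist_self {u : ℂ → ℝ} (hu : Continuous u) (a : ℂ) :
    Tendsto (conformalDist u a) (nhds a) (nhds 0) := by
  obtain ⟨M, hM⟩ := (isCompact_closedBall a 1).bddAbove_image
    (f := fun z => Real.exp (u z)) (by fun_prop)
  have hle : ∀ᶠ z in nhds a, conformalDist u a z ≤ M * ‖z - a‖ := by
    filter_upwards [closedBall_mem_nhds a one_pos] with z hz
    refine conformalDist_le_mul_norm hu fun w hw => hM ⟨w, ?_, rfl⟩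
    exact (convex_closedBall a 1).segment_subset (mem_closedBall_self zero_le_one) hz hw
  have hlim : Tendsto (fun z => M * ‖z - a‖) (nhds a) (nhds 0) := by
    have : Continuous fun z => M * ‖z - a‖ := by fun_prop
    simpa using this.tendsto a
  exact tendsto_of_tendsto_of_tendsto_of_le_of_le' tendsto_const_nhds hlim
    (Eventually.of_forall fun z => conformalDist_nonneg u a z) hle

theorem continuous_conformalDist {u : ℂ → ℝ} (hu : Continuous u) (o : ℂ) :
    Continuous (conformalDist u o) := by
  refine continuous_iff_continuousAt.2 fun z => ?_
  have h := tendsto_conformalDist_self hu z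
  refine tendsto_iff_dist_tendsto_zero.2
    (squeeze_zero (fun _ => dist_nonneg) (fun w => ?_) h)
  rw [Real.dist_eq, abs_le]
  have h1 := conformalDist_triangle hu o w z
  have h2 := conformalDist_triangle hu o z w
  rw [conformalDist_comm hu w z] at h1
  constructor <;> linarith

/-- The distance to `o` on a circle around `o` is at most the distance to points outside. -/
theorem exists_mem_sphere_conformalDist_le {u : ℂ → ℝ} (hu : Continuous u) (o : ℂ) {r : ℝ}
    (hr : 0 ≤ r) :
    ∃ y ∈ sphere o r, ∀ z, r ≤ ‖z - o‖ → conformalDist u o y ≤ conformalDist u o z := by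
  obtain ⟨y, hy, hmin⟩ := (isCompact_sphere o r).exists_isMinOn (NormedSpace.sphere_nonempty.2 hr)
    (continuous_conformalDist hu o).continuousOn
  refine ⟨y, hy, fun z hz => le_of_forall_gt fun l hl => ?_⟩
  obtain ⟨γ, hγ, hlt⟩ := exists_isRestingPath_lt hu hl
  have hc : Continuous fun t => ‖γ t - o‖ := (hγ.contDiff.continuous.sub continuous_const).norm
  obtain ⟨t, ht, he⟩ := intermediate_value_Icc (zero_le_one (α := ℝ)) hc.continuousOn
    (show r ∈ Set.Icc ‖γ 0 - o‖ ‖γ 1 - o‖ by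
      rw [hγ.eq_left 0 le_rfl, hγ.eq_right 1 le_rfl]; simpa using ⟨hr, hz⟩)
  have h1 : conformalDist u o y ≤ conformalDist u o (γ t) :=
    hmin (show γ t ∈ sphere o r by simpa [dist_eq_norm] using he)
  have h2 := conformalDist_le_integral hu hγ.contDiff ht.1
  rw [hγ.eq_left 0 le_rfl] at h2
  have h3 : ∫ t in (0 : ℝ)..t, conformalSpeed u γ t ≤ ∫ t in (0 : ℝ)..1, conformalSpeed u γ t :=
    intervalIntegral.integral_mono_interval le_rfl ht.1 ht.2
      (ae_of_all _ fun t => conformalSpeed_nonneg u γ t)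
      ((continuous_conformalSpeed hu hγ.contDiff).intervalIntegrable _ _)
  linarith

/-- Divergent curves have infinite length in the metric `e^{2u}|dz|²`. -/
def IsConformallyComplete (u : ℂ → ℝ) : Prop :=
  ∀ γ : ℝ → ℂ, ContDiffOn ℝ 1 γ (Set.Ico 0 1) →
    Tendsto (fun t => ‖γ t‖) (nhdsWithin 1 (Set.Iio 1)) atTop →
    ∫⁻ t in Set.Ioo (0 : ℝ) 1, ENNReal.ofReal (Real.exp (u (γ t)) * ‖deriv γ t‖) = ⊤

/-- The concatenation of infinitely many resting paths. -/
noncomputable def concatPaths (γ : ℕ → ℝ → ℂ) (x : ℕ → ℂ) (t : ℝ) : ℂ :=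
  x 0 + ∑ k ∈ Finset.range (⌊t⌋₊ + 1), (γ k (t - k) - x k)

section concat

variable {γ : ℕ → ℝ → ℂ} {x : ℕ → ℂ}

theorem concatPaths_eq_sum (hγ : ∀ k, IsRestingPath (γ k) (x k) (x (k + 1))) {n : ℕ} (hn : 0 < n)
    {t : ℝ} (ht : t < n) : concatPaths γ x t = x 0 + ∑ k ∈ Finset.range n, (γ k (t - k) - x k) := by
  rw [concatPaths]
  congr 1
  refine Finset.sum_subset ?_ ?_
  · intro k hk
    rw [Finset.mem_range] at hk ⊢
    rcases le_or_gt 0 t with h0 | h0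
    · have := (Nat.floor_lt h0).2 ht
      omega
    · have := Nat.floor_of_nonpos h0.le
      omega
  · intro k _ hk
    rw [Finset.mem_range, not_lt] at hk
    have h1 : t < k := (Nat.lt_floor_add_one t).trans_le (by exact_mod_cast hk)
    rw [(hγ k).eq_left _ (by linarith), sub_self]

theorem contDiff_concatPaths (hγ : ∀ k, IsRestingPath (γ k) (x k) (x (k + 1))) :
    ContDiff ℝ 1 (concatPaths γ x) := by
  refine contDiff_iff_contDiffAt.2 fun t => ?_
  obtain ⟨n, hn⟩ := exists_nat_gt (max t 0)
  rw [max_lt_iff] at hn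
  have he : concatPaths γ x =ᶠ[nhds t]
      fun t => x 0 + ∑ k ∈ Finset.range n, (γ k (t - k) - x k) := by
    filter_upwards [Iio_mem_nhds hn.1] with s hs
    exact concatPaths_eq_sum hγ (by exact_mod_cast hn.2) hs
  refine ContDiffAt.congr_of_eventuallyEq ?_ he
  refine contDiffAt_const.add (ContDiffAt.sum fun k _ => ?_)
  exact (((hγ k).contDiff.comp (by fun_prop : ContDiff ℝ 1 fun t : ℝ => t - k)).sub
    contDiff_const).contDiffAt

theorem concatPaths_eq (hγ : ∀ k, IsRestingPath (γ k) (x k) (x (k + 1))) {n : ℕ} {t : ℝ}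
    (h1 : (n : ℝ) ≤ t) (h2 : t < n + 1) : concatPaths γ x t = γ n (t - n) := by
  rw [concatPaths_eq_sum hγ n.succ_pos (by push_cast; exact h2), Finset.sum_range_succ]
  have : ∑ k ∈ Finset.range n, (γ k (t - k) - x k) = ∑ k ∈ Finset.range n, (x (k + 1) - x k) := by
    refine Finset.sum_congr rfl fun k hk => ?_
    have : (k : ℝ) + 1 ≤ n := by exact_mod_cast Finset.mem_range.1 hk
    rw [(hγ k).eq_right _ (by linarith)]
  rw [this, Finset.sum_range_sub]
  ring

theorem integral_conformalSpeed_concatPaths {u : ℂ → ℝ} (hu : Continuous u)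
    (hγ : ∀ k, IsRestingPath (γ k) (x k) (x (k + 1))) (n : ℕ) :
    ∫ t in (0 : ℝ)..n, conformalSpeed u (concatPaths γ x) t =
      ∑ k ∈ Finset.range n, ∫ t in (0 : ℝ)..1, conformalSpeed u (γ k) t := by
  have hcont := continuous_conformalSpeed hu (contDiff_concatPaths hγ)
  have := intervalIntegral.sum_integral_adjacent_intervals (μ := volume) (n := n)
    (a := fun k : ℕ => (k : ℝ)) (f := conformalSpeed u (concatPaths γ x))
    (fun k _ => hcont.intervalIntegrable _ _)
  rw [Nat.cast_zero] at this
  rw [← this]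
  refine Finset.sum_congr rfl fun k _ => ?_
  have hk : (k : ℝ) ≤ (k + 1 : ℕ) := by push_cast; linarith
  have e : ∫ t in (k : ℝ)..(k + 1 : ℕ), conformalSpeed u (γ k) (t - k) =
      ∫ t in (0 : ℝ)..1, conformalSpeed u (γ k) t := by
    rw [intervalIntegral.integral_comp_sub_right]; norm_num
  rw [← e, intervalIntegral.integral_of_le hk, integral_Ioc_eq_integral_Ioo,
    intervalIntegral.integral_of_le hk, integral_Ioc_eq_integral_Ioo]
  refine setIntegral_congr_fun measurableSet_Ioo fun t ht => ?_
  have he : concatPaths γ x =ᶠ[nhds t] fun t => γ k (t - k) := by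
    filter_upwards [Ioo_mem_nhds ht.1 ht.2] with s hs
    exact concatPaths_eq hγ hs.1.le (by simpa using hs.2)
  simp only [conformalSpeed, he.deriv_eq, he.eq_of_nhds, deriv_comp_sub_const]

end concat

/-- A divergent curve on `[0, ∞)` cannot have finite length. -/
theorem IsConformallyComplete.not_bounded_length {u : ℂ → ℝ} (hu : Continuous u)
    (hcomp : IsConformallyComplete u) {Γ : ℝ → ℂ} (hΓ : ContDiff ℝ 1 Γ)
    (hlim : Tendsto (fun t => ‖Γ t‖) atTop atTop) {L : ℝ}
    (hL : ∀ n : ℕ, ∫ t in (0 : ℝ)..n, conformalSpeed u Γ t ≤ L) : False := by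
  set φ : ℝ → ℝ := fun t => t * (1 - t)⁻¹ with hφ
  have hφd : ∀ t < 1, HasDerivAt φ (((1 - t) ^ 2)⁻¹) t := by
    intro t ht
    have h1 : (1 - t) ≠ 0 := by linarith
    refine ((hasDerivAt_id t).mul (((hasDerivAt_id t).const_sub 1).inv h1)).congr_deriv ?_
    simp
    field_simp
    ring
  have hφc : ContDiffOn ℝ 1 φ (Set.Iio 1) := by
    refine contDiffOn_id.mul ((contDiffOn_const.sub contDiffOn_id).inv fun t ht => ?_)
    have := Set.mem_Iio.1 ht
    simp only [id]
    linarith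
  have hlimφ : Tendsto φ (nhdsWithin 1 (Set.Iio 1)) atTop := by
    have h1 : Tendsto (fun t : ℝ => 1 - t) (nhdsWithin 1 (Set.Iio 1))
        (nhdsWithin 0 (Set.Ioi 0)) := by
      refine tendsto_nhdsWithin_iff.2 ⟨?_, ?_⟩
      · have : Continuous fun t : ℝ => 1 - t := by fun_prop
        simpa using (this.tendsto 1).mono_left nhdsWithin_le_nhds
      · filter_upwards [self_mem_nhdsWithin] with t ht
        simpa using ht
    exact Tendsto.pos_mul_atTop one_pos (tendsto_id.mono_left nhdsWithin_le_nhds)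
      (tendsto_inv_nhdsGT_zero.comp h1)
  have h1 : ContDiffOn ℝ 1 (Γ ∘ φ) (Set.Iio 1) := hΓ.comp_contDiffOn hφc
  have h2 := hcomp (Γ ∘ φ) (h1.mono fun t ht => ht.2) (hlim.comp hlimφ)
  have hsp : ContinuousOn (conformalSpeed u (Γ ∘ φ)) (Set.Iio 1) := by
    have h3 := h1.continuousOn_deriv_of_isOpen isOpen_Iio le_rfl
    exact (Real.continuous_exp.comp_continuousOn (hu.comp_continuousOn h1.continuousOn)).mul h3.norm
  have hbound : ∀ b ∈ Set.Ico (0 : ℝ) 1, ∫ t in (0 : ℝ)..b, conformalSpeed u (Γ ∘ φ) t ≤ L := by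
    intro b hb
    have hlt : ∀ t ∈ Set.Icc 0 b, t < 1 := fun t ht => ht.2.trans_lt hb.2
    rw [integral_conformalSpeed_comp hu hΓ hb.1 (fun t ht => (hφd t (hlt t ht)).differentiableAt)
      ((hφc.continuousOn_deriv_of_isOpen isOpen_Iio le_rfl).mono hlt)
      (fun t ht => by rw [(hφd t (hlt t ht)).deriv]; positivity)]
    obtain ⟨n, hn⟩ := exists_nat_ge (φ b)
    have h0 : φ 0 = 0 := by simp [hφ]
    have hb0 : 0 ≤ φ b := mul_nonneg hb.1 (inv_nonneg.2 (by linarith [hb.2]))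
    rw [h0]
    refine le_trans ?_ (hL n)
    exact intervalIntegral.integral_mono_interval le_rfl hb0 hn
      (ae_of_all _ fun t => conformalSpeed_nonneg u Γ t)
      ((continuous_conformalSpeed hu hΓ).intervalIntegrable _ _)
  have hb : ∀ n : ℕ, 1 - 1 / ((n : ℝ) + 1) ∈ Set.Ico (0 : ℝ) 1 := by
    intro n
    have h1 : 0 < 1 / ((n : ℝ) + 1) := by positivity
    have h2 : 1 / ((n : ℝ) + 1) ≤ 1 :=
      div_le_one_of_le₀ (by linarith [n.cast_nonneg (α := ℝ)]) (by positivity)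
    exact ⟨by linarith, by linarith⟩
  have hint : IntegrableOn (conformalSpeed u (Γ ∘ φ)) (Set.Ioc 0 1) := by
    refine integrableOn_Ioc_of_intervalIntegral_norm_bounded_right (I := L)
      (l := atTop) (b := fun n : ℕ => 1 - 1 / ((n : ℝ) + 1)) (fun n => ?_) ?_
      (Eventually.of_forall fun n => ?_)
    · refine (ContinuousOn.integrableOn_compact isCompact_Icc
        (hsp.mono fun t ht => ?_)).mono_set Set.Ioc_subset_Icc_self
      exact ht.2.trans_lt (hb n).2
    · simpa using tendsto_one_div_add_atTop_nhds_zero_nat.const_sub (1 : ℝ)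
    · rw [← intervalIntegral.integral_of_le (hb n).1]
      simp_rw [Real.norm_of_nonneg (conformalSpeed_nonneg u _ _)]
      exact hbound _ (hb n)
  have h4 : ∫⁻ t in Set.Ioo (0 : ℝ) 1, ENNReal.ofReal (conformalSpeed u (Γ ∘ φ) t) < ⊤ :=
    (hint.mono_set Set.Ioo_subset_Ioc_self).lintegral_lt_top
  exact h4.ne h2

/-- If a disc of radius `L` of the conformal metric is unbounded, then so is a smaller disc around
some point at distance less than `L`. -/
theorem exists_conformalDist_lt_and_not_isBounded {u : ℂ → ℝ} (hu : Continuous u) {a : ℂ} {L : ℝ}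
    (hL : 0 < L) (h : ¬ Bornology.IsBounded {y | conformalDist u a y < L}) :
    ∃ b, conformalDist u a b < L ∧
      ¬ Bornology.IsBounded {y | conformalDist u b y < 3 / 4 * L} := by
  by_cases hA : Bornology.IsBounded {y | conformalDist u a y < 3 / 4 * L}
  swap
  · exact ⟨a, by rwa [conformalDist_self hu], hA⟩
  obtain ⟨R, hR⟩ := hA.exists_norm_le
  have hy : ∀ n : ℕ, ∃ y, conformalDist u a y < L ∧ max (n : ℝ) R < ‖y‖ := by
    intro n
    by_contra! hcon
    exact h (isBounded_iff_forall_norm_le.2 ⟨_, hcon⟩)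
  choose y hyL hyn using hy
  have hp : ∀ n : ℕ, ∃ p, conformalDist u a p ≤ L / 2 ∧ conformalDist u p (y n) < L / 2 := by
    intro n
    obtain ⟨γ, hγ, hlt⟩ := exists_isRestingPath_lt hu (hyL n)
    have hc := continuous_conformalSpeed hu hγ.contDiff
    have hi : ∀ a b, IntervalIntegrable (conformalSpeed u γ) volume a b :=
      fun _ _ => hc.intervalIntegrable _ _
    have hF : ContinuousOn (fun t => ∫ s in (0 : ℝ)..t, conformalSpeed u γ s) (Set.Icc 0 1) :=
      (intervalIntegral.continuous_primitive hi 0).continuousOn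
    have hge : 3 / 4 * L ≤ ∫ s in (0 : ℝ)..1, conformalSpeed u γ s := by
      have h1 := conformalDist_le_integral hu hγ.contDiff (zero_le_one (α := ℝ))
      rw [hγ.eq_left 0 le_rfl, hγ.eq_right 1 le_rfl] at h1
      refine le_trans ?_ h1
      by_contra! hcon
      exact absurd (hR _ hcon) (not_le.2 ((le_max_right _ _).trans_lt (hyn n)))
    obtain ⟨t, ht, hFt⟩ := intermediate_value_Icc (zero_le_one (α := ℝ)) hF
      (show L / 2 ∈ Set.Icc _ _ by
        simp only [intervalIntegral.integral_same]
        exact ⟨by linarith, by linarith⟩)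
    refine ⟨γ t, ?_, ?_⟩
    · have := conformalDist_le_integral hu hγ.contDiff ht.1
      rw [hγ.eq_left 0 le_rfl] at this
      exact this.trans_eq hFt
    · have h1 := conformalDist_le_integral hu hγ.contDiff ht.2
      rw [hγ.eq_right 1 le_rfl] at h1
      have h2 := intervalIntegral.integral_add_adjacent_intervals (hi 0 t) (hi t 1)
      simp only at hFt
      linarith
  choose p hpa hpy using hp
  have hpR : ∀ n, p n ∈ closedBall (0 : ℂ) R := fun n => by
    simpa using hR (p n) (show conformalDist u a (p n) < 3 / 4 * L by linarith [hpa n])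
  obtain ⟨b, -, φ, hφ, hlim⟩ := (isCompact_closedBall (0 : ℂ) R).tendsto_subseq hpR
  refine ⟨b, ?_, fun hb => ?_⟩
  · have := le_of_tendsto (((continuous_conformalDist hu a).tendsto b).comp hlim)
      (Eventually.of_forall fun n => hpa (φ n))
    linarith
  · obtain ⟨R', hR'⟩ := hb.exists_norm_le
    have h1 : ∀ᶠ n in atTop, conformalDist u b (p (φ n)) < L / 4 :=
      ((tendsto_conformalDist_self hu b).comp hlim).eventually_lt_const (by linarith)
    obtain ⟨n, hn, hnR⟩ := (h1.and (eventually_ge_atTop ⌈R'⌉₊)).exists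
    have h2 := conformalDist_triangle hu b (p (φ n)) (y (φ n))
    have h3 := hR' (y (φ n)) (show conformalDist u b (y (φ n)) < _ by linarith [hpy (φ n)])
    have h4 : R' ≤ (φ n : ℝ) := (Nat.ceil_le.1 hnR).trans (by exact_mod_cast hφ.id_le n)
    linarith [(le_max_left (φ n : ℝ) R).trans_lt (hyn (φ n))]

/-- Hopf and Rinow: the discs of a complete conformal metric are bounded. -/
theorem IsConformallyComplete.isBounded {u : ℂ → ℝ} (hu : Continuous u)
    (hcomp : IsConformallyComplete u) (o : ℂ) (L : ℝ) :
    Bornology.IsBounded {y | conformalDist u o y < L} := by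
  by_contra hunb
  have hL : 0 < L := by
    by_contra! hL
    refine hunb (Bornology.isBounded_empty.subset fun y hy => ?_)
    exact absurd (hy.trans_le hL) (not_lt.2 (conformalDist_nonneg u o y))
  have hpow : ∀ k : ℕ, 0 < (3 / 4 : ℝ) ^ k * L := fun k => by positivity
  have hstep : ∀ (k : ℕ) (a : {a // ¬ Bornology.IsBounded
      {y | conformalDist u a y < (3 / 4 : ℝ) ^ k * L}}), ∃ b : {a // ¬ Bornology.IsBounded
      {y | conformalDist u a y < (3 / 4 : ℝ) ^ (k + 1) * L}},
        conformalDist u a b < (3 / 4 : ℝ) ^ k * L := by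
    rintro k ⟨a, ha⟩
    obtain ⟨b, hb, hb'⟩ := exists_conformalDist_lt_and_not_isBounded hu (hpow k) ha
    refine ⟨⟨b, ?_⟩, hb⟩
    rwa [pow_succ', mul_assoc]
  choose next hnext using hstep
  let pts : (k : ℕ) → {a // ¬ Bornology.IsBounded
      {y | conformalDist u a y < (3 / 4 : ℝ) ^ k * L}} :=
    fun k => Nat.rec ⟨o, by simpa using hunb⟩ (fun k a => next k a) k
  set x : ℕ → ℂ := fun k => (pts k).1 with hx
  have hxunb : ∀ k, ¬ Bornology.IsBounded {y | conformalDist u (x k) y < (3 / 4 : ℝ) ^ k * L} :=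
    fun k => (pts k).2
  have hxd : ∀ k, conformalDist u (x k) (x (k + 1)) < (3 / 4 : ℝ) ^ k * L :=
    fun k => hnext k (pts k)
  choose γ hγ hlen using fun k => exists_isRestingPath_lt hu (hxd k)
  refine hcomp.not_bounded_length hu (contDiff_concatPaths hγ) (L := 4 * L) ?_ fun n => ?_
  · refine tendsto_atTop.2 fun R => ?_
    set R' := max R 0
    obtain ⟨z₀, -, hmin⟩ := (isCompact_closedBall (0 : ℂ) (R' + 1)).exists_isMinOn
      ⟨0, mem_closedBall_self (by positivity)⟩
      (f := fun z => Real.exp (u z)) (by fun_prop)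
    have hlim : Tendsto (fun k : ℕ => (3 / 4 : ℝ) ^ k * L) atTop (nhds 0) := by
      simpa using (tendsto_pow_atTop_nhds_zero_of_lt_one (by norm_num) (by norm_num)).mul_const L
    have hev := hlim.eventually_lt_const (half_pos (Real.exp_pos (u z₀)))
    obtain ⟨N, hN⟩ := eventually_atTop.1 hev
    filter_upwards [eventually_ge_atTop (N : ℝ)] with t ht
    by_contra! hlt
    have ht0 : 0 ≤ t := (Nat.cast_nonneg N).trans ht
    set k := ⌊t⌋₊ with hk
    have hk1 : (k : ℝ) ≤ t := Nat.floor_le ht0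
    have hk2 : t < k + 1 := Nat.lt_floor_add_one t
    have hNk : N ≤ k := Nat.le_floor ht
    have hsm := hN k hNk
    rw [concatPaths_eq hγ hk1 hk2] at hlt
    set w := γ k (t - k)
    have hd : conformalDist u (x k) w < (3 / 4 : ℝ) ^ k * L := by
      have h1 := conformalDist_le_integral hu (hγ k).contDiff (show (0 : ℝ) ≤ t - k by linarith)
      rw [(hγ k).eq_left 0 le_rfl] at h1
      refine h1.trans_lt (lt_of_le_of_lt ?_ (hlen k))
      exact intervalIntegral.integral_mono_interval le_rfl (by linarith) (by linarith)
        (ae_of_all _ fun t => conformalSpeed_nonneg u _ t)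
        ((continuous_conformalSpeed hu (hγ k).contDiff).intervalIntegrable _ _)
    refine hxunb k ((isBounded_ball (x := w) (r := 1)).subset fun y hy => ?_)
    by_contra hyw
    have h1 := mul_le_conformalDist hu (a := w) (b := y) (ρ := 1) (Real.exp_pos (u z₀)).le
      (fun z hz => hmin ?_) (by simpa [dist_eq_norm] using hyw)
    · have h2 := conformalDist_triangle hu w (x k) y
      rw [conformalDist_comm hu w (x k)] at h2
      have h3 : conformalDist u (x k) y < (3 / 4 : ℝ) ^ k * L := hy
      linarith
    · have h4 : dist z w ≤ 1 := hz
      have h5 : ‖w‖ ≤ R' := hlt.le.trans (le_max_left _ _)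
      rw [mem_closedBall, dist_zero_right]
      have := norm_le_norm_add_norm_sub w z
      rw [dist_eq_norm, norm_sub_rev] at h4
      linarith
  · rw [integral_conformalSpeed_concatPaths hu hγ]
    calc ∑ k ∈ Finset.range n, ∫ t in (0 : ℝ)..1, conformalSpeed u (γ k) t
        ≤ ∑ k ∈ Finset.range n, (3 / 4 : ℝ) ^ k * L := Finset.sum_le_sum fun k _ => (hlen k).le
      _ = 4 * (1 - (3 / 4 : ℝ) ^ n) * L := by
        rw [← Finset.sum_mul, geom_sum_eq (by norm_num)]; ring
      _ ≤ 4 * L := by nlinarith [hpow n]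

/-- The complex number representing the differential of `u`, so that `du(v) = Re (G v)`. -/
noncomputable def complexGradient (u : ℂ → ℝ) (z : ℂ) : ℂ :=
  fderiv ℝ u z 1 - fderiv ℝ u z Complex.I * Complex.I

theorem re_complexGradient_mul (u : ℂ → ℝ) (z v : ℂ) :
    (complexGradient u z * v).re = fderiv ℝ u z v := by
  have hv : v = v.re • (1 : ℂ) + v.im • Complex.I := by
    apply Complex.ext <;> simp
  conv_rhs => rw [hv]
  rw [map_add, map_smul, map_smul]
  simp [complexGradient]
  ring

theorem continuous_complexGradient {u : ℂ → ℝ} (hu : ContDiff ℝ 1 u) :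
    Continuous (complexGradient u) := by
  have : Continuous (fderiv ℝ u) := hu.continuous_fderiv one_ne_zero
  unfold complexGradient
  fun_prop

/-- The variation field of the unit speed dilation of a curve in a flat metric, along `γ`. -/
theorem exists_variationField {u : ℂ → ℝ} (hu : ContDiff ℝ 1 u) {γ : ℝ → ℂ}
    (hγ : ContDiff ℝ 1 γ) :
    ∃ φ : ℝ → ℂ, φ 0 = 0 ∧
      (∀ t, HasDerivAt φ (deriv γ t * (1 - complexGradient u (γ t) * φ t)) t) ∧
      ∀ t, 0 ≤ t → ‖φ t‖ ≤ Real.exp (-u (γ t)) * ∫ s in (0 : ℝ)..t, conformalSpeed u γ s := by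
  have hγ' : Continuous (deriv γ) := hγ.continuous_deriv le_rfl
  have hg : Continuous fun s => complexGradient u (γ s) * deriv γ s :=
    ((continuous_complexGradient hu).comp hγ.continuous).mul hγ'
  set θ : ℝ → ℂ := fun t => ∫ s in (0 : ℝ)..t, complexGradient u (γ s) * deriv γ s with hθ
  have hθd : ∀ t, HasDerivAt θ (complexGradient u (γ t) * deriv γ t) t := fun t =>
    intervalIntegral.integral_hasDerivAt_right (hg.intervalIntegrable _ _)
      (hg.stronglyMeasurableAtFilter _ _) hg.continuousAt
  have hθc : Continuous θ := continuous_iff_continuousAt.2 fun t => (hθd t).continuousAt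
  have hθre : ∀ t, (θ t).re = u (γ t) - u (γ 0) := by
    intro t
    have h1 : ∀ s, HasDerivAt (fun s => u (γ s)) (complexGradient u (γ s) * deriv γ s).re s := by
      intro s
      rw [re_complexGradient_mul]
      exact ((hu.differentiable one_ne_zero _).hasFDerivAt).comp_hasDerivAt s
        (hγ.differentiable one_ne_zero s).hasDerivAt
    have h2 := intervalIntegral.integral_eq_sub_of_hasDerivAt (fun s _ => h1 s)
      ((Complex.continuous_re.comp hg).intervalIntegrable 0 t)
    rw [← h2]
    exact (intervalIntegral.intervalIntegral_re (𝕜 := ℂ) (hg.intervalIntegrable _ _)).symm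
  have hj : Continuous fun s => deriv γ s * Complex.exp (θ s) := hγ'.mul hθc.cexp
  set J : ℝ → ℂ := fun t => ∫ s in (0 : ℝ)..t, deriv γ s * Complex.exp (θ s) with hJ
  have hJd : ∀ t, HasDerivAt J (deriv γ t * Complex.exp (θ t)) t := fun t =>
    intervalIntegral.integral_hasDerivAt_right (hj.intervalIntegrable _ _)
      (hj.stronglyMeasurableAtFilter _ _) hj.continuousAt
  refine ⟨fun t => Complex.exp (-θ t) * J t, by simp [hJ], fun t => ?_, fun t ht => ?_⟩
  · refine ((hθd t).neg.cexp.mul (hJd t)).congr_deriv ?_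
    have : Complex.exp (-θ t) * Complex.exp (θ t) = 1 := by rw [← Complex.exp_add]; simp
    linear_combination (deriv γ t) * this
  · rw [norm_mul, Complex.norm_exp, Complex.neg_re, hθre]
    have h1 : ‖J t‖ ≤ ∫ s in (0 : ℝ)..t, Real.exp (-u (γ 0)) * conformalSpeed u γ s := by
      refine (intervalIntegral.norm_integral_le_integral_norm ht).trans (le_of_eq ?_)
      congr 1 with s
      rw [norm_mul, Complex.norm_exp, hθre, conformalSpeed, sub_eq_add_neg, Real.exp_add]
      ring
    rw [intervalIntegral.integral_const_mul] at h1
    calc Real.exp (-(u (γ t) - u (γ 0))) * ‖J t‖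
        ≤ Real.exp (-(u (γ t) - u (γ 0))) *
          (Real.exp (-u (γ 0)) * ∫ s in (0 : ℝ)..t, conformalSpeed u γ s) := by gcongr
      _ = _ := by
        rw [← mul_assoc, ← Real.exp_add]
        congr 2
        ring

theorem eventually_abs_sub_fderiv_le {u : ℂ → ℝ} (hu : ContDiff ℝ 1 u) {K : Set ℂ}
    (hK : IsCompact K) {η : ℝ} (hη : 0 < η) :
    ∀ᶠ h : ℂ in nhds 0, ∀ x ∈ K, |u (x + h) - u x - fderiv ℝ u x h| ≤ η * ‖h‖ := by
  refine hK.eventually_forall_of_forall_eventually fun x₀ _ => ?_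
  have hd : HasStrictFDerivAt u (fderiv ℝ u x₀) x₀ := hu.contDiffAt.hasStrictFDerivAt one_ne_zero
  have h1 := hd.isLittleO.def (half_pos hη)
  have h2 : Tendsto (fun p : ℂ × ℂ => (p.2 + p.1, p.2)) (nhds (0, x₀)) (nhds (x₀, x₀)) := by
    have : Continuous fun p : ℂ × ℂ => (p.2 + p.1, p.2) := by fun_prop
    simpa using this.tendsto (0, x₀)
  have h3 : ∀ᶠ p : ℂ × ℂ in nhds (0, x₀), ‖fderiv ℝ u p.2 - fderiv ℝ u x₀‖ < η / 2 := by
    have : Continuous fun p : ℂ × ℂ => ‖fderiv ℝ u p.2 - fderiv ℝ u x₀‖ := by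
      have := hu.continuous_fderiv one_ne_zero
      fun_prop
    exact (this.tendsto _).eventually_lt_const (by simpa using half_pos hη)
  filter_upwards [h2.eventually h1, h3] with p hp hq
  simp only [add_sub_cancel_left, Real.norm_eq_abs] at hp
  have h4 := (fderiv ℝ u p.2 - fderiv ℝ u x₀).le_opNorm p.1
  rw [sub_apply, Real.norm_eq_abs] at h4
  have h5 : ‖fderiv ℝ u p.2 - fderiv ℝ u x₀‖ * ‖p.1‖ ≤ η / 2 * ‖p.1‖ := by gcongr
  rw [abs_le] at *
  constructor <;> linarith [hp.1, hp.2, h4.1, h4.2]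

theorem eventually_squareSum_le {u : ℂ → ℝ} (hs : ∀ z, SquareSuperharmonicAt u z) {K : Set ℂ}
    (hK : IsCompact K) {η : ℝ} (hη : 0 < η) :
    ∀ᶠ h : ℂ in nhds 0, ∀ x ∈ K, squareSum u x h ≤ 4 * u x + η * ‖h‖ ^ 2 := by
  refine hK.eventually_forall_of_forall_eventually fun x₀ _ => ?_
  exact (continuous_swap.tendsto ((0 : ℂ), x₀)).eventually (hs x₀ η hη)

theorem eventually_forall_mul {p : ℂ → Prop} (hp : ∀ᶠ h in nhds 0, p h) (P : ℝ) :
    ∀ᶠ w : ℂ in nhds 0, ∀ φ : ℂ, ‖φ‖ ≤ P → p (w * φ) := by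
  have hK : IsCompact (closedBall (0 : ℂ) P) := isCompact_closedBall _ _
  have := hK.eventually_forall_of_forall_eventually (x₀ := (0 : ℂ)) (P := fun w φ => p (w * φ))
    fun φ _ => by
      have h2 : Tendsto (fun z : ℂ × ℂ => z.1 * z.2) (nhds (0, φ)) (nhds 0) := by
        have : Continuous fun z : ℂ × ℂ => z.1 * z.2 := by fun_prop
        simpa using this.tendsto (0, φ)
      exact h2.eventually hp
  filter_upwards [this] with w hw φ hφ using hw φ (by simpa using hφ)

/-- The logarithm of the dilation of length elements at `x` under the variation field `φ` with
parameter `w`, normalized by the factor `e^{Re w}`. -/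
noncomputable def variationExponent (u : ℂ → ℝ) (x φ w : ℂ) : ℝ :=
  u (x + w * φ) - u x + Real.log ‖1 + w * (1 - complexGradient u x * φ)‖ - w.re

theorem abs_log_norm_one_add_sub_re_le {ζ : ℂ} (hζ : ‖ζ‖ ≤ 1 / 2) :
    |Real.log ‖1 + ζ‖ - ζ.re| ≤ ‖ζ‖ ^ 2 := by
  have h1 := Complex.norm_log_one_add_sub_self_le (z := ζ) (by linarith)
  have h2 := Complex.abs_re_le_norm (Complex.log (1 + ζ) - ζ)
  rw [Complex.sub_re, Complex.log_re] at h2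
  refine h2.trans (h1.trans ?_)
  have h3 : (1 - ‖ζ‖)⁻¹ ≤ 2 := by
    rw [inv_le_comm₀ (by linarith) (by norm_num)]
    linarith
  nlinarith [mul_le_mul_of_nonneg_left h3 (sq_nonneg ‖ζ‖)]

theorem exists_bound_variation {u : ℂ → ℝ} (hu : ContDiff ℝ 1 u) {K : Set ℂ}
    (hK : IsCompact K) {P : ℝ} (hP : 0 ≤ P) :
    ∃ B : ℝ, 1 ≤ B ∧ ∀ x ∈ K, ∀ φ : ℂ, ‖φ‖ ≤ P → ‖1 - complexGradient u x * φ‖ ≤ B := by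
  obtain ⟨C, hC⟩ := hK.exists_bound_of_continuousOn (continuous_complexGradient hu).continuousOn
  refine ⟨1 + |C| * P, by nlinarith [abs_nonneg C, mul_nonneg (abs_nonneg C) hP],
    fun x hx φ hφ => ?_⟩
  calc ‖1 - complexGradient u x * φ‖ ≤ ‖(1 : ℂ)‖ + ‖complexGradient u x * φ‖ := norm_sub_le _ _
    _ ≤ 1 + |C| * P := by
      rw [norm_one, norm_mul]
      gcongr
      exact (hC x hx).trans (le_abs_self C)

theorem eventually_abs_variationExponent_le {u : ℂ → ℝ} (hu : ContDiff ℝ 1 u) {K : Set ℂ}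
    (hK : IsCompact K) {P : ℝ} (hP : 0 ≤ P) {τ : ℝ} (hτ : 0 < τ) :
    ∀ᶠ w : ℂ in nhds 0, ∀ x ∈ K, ∀ φ : ℂ, ‖φ‖ ≤ P →
      ‖w * (1 - complexGradient u x * φ)‖ ≤ 1 / 2 ∧ |variationExponent u x φ w| ≤ τ * ‖w‖ := by
  obtain ⟨B, hB1, hB⟩ := exists_bound_variation hu hK hP
  have h1 := eventually_forall_mul (eventually_abs_sub_fderiv_le hu hK
    (show 0 < τ / (2 * (P + 1)) by positivity)) P
  have h2 : ∀ᶠ w : ℂ in nhds 0, B * ‖w‖ < 1 / 2 := by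
    have : Continuous fun w : ℂ => B * ‖w‖ := by fun_prop
    exact (this.tendsto 0).eventually_lt_const (by simp)
  have h3 : ∀ᶠ w : ℂ in nhds 0, B ^ 2 * ‖w‖ < τ / 2 := by
    have : Continuous fun w : ℂ => B ^ 2 * ‖w‖ := by fun_prop
    exact (this.tendsto 0).eventually_lt_const (by simpa using hτ)
  filter_upwards [h1, h2, h3] with w hw1 hw2 hw3 x hx φ hφ
  set β := 1 - complexGradient u x * φ with hβ
  have hβB : ‖β‖ ≤ B := hB x hx φ hφ
  have hwβ : ‖w * β‖ ≤ B * ‖w‖ := by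
    rw [norm_mul, mul_comm]; gcongr
  have hwφ : ‖w * φ‖ ≤ P * ‖w‖ := by
    rw [norm_mul, mul_comm]; gcongr
  refine ⟨hwβ.trans hw2.le, ?_⟩
  have e1 := hw1 φ hφ x hx
  have e2 := abs_log_norm_one_add_sub_re_le (hwβ.trans hw2.le)
  rw [← re_complexGradient_mul] at e1
  have e3 : (w * β).re = w.re - (complexGradient u x * (w * φ)).re := by
    rw [hβ, ← Complex.sub_re]; ring_nf
  have e4 : ‖w * β‖ ^ 2 ≤ τ / 2 * ‖w‖ := by
    calc ‖w * β‖ ^ 2 ≤ (B * ‖w‖) ^ 2 := by gcongr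
      _ = B ^ 2 * ‖w‖ * ‖w‖ := by ring
      _ ≤ τ / 2 * ‖w‖ := by gcongr
  have e5 : τ / (2 * (P + 1)) * ‖w * φ‖ ≤ τ / 2 * ‖w‖ := by
    calc τ / (2 * (P + 1)) * ‖w * φ‖ ≤ τ / (2 * (P + 1)) * ((P + 1) * ‖w‖) := by
          gcongr; nlinarith [norm_nonneg w]
      _ = τ / 2 * ‖w‖ := by field_simp
  rw [variationExponent, ← hβ]
  rw [abs_le] at *
  constructor <;> linarith [e1.1, e1.2, e2.1, e2.2]

theorem sum_log_norm_one_add_le {ζ : ℂ} (hζ : ‖ζ‖ ≤ 1 / 2) :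
    Real.log ‖1 + ζ‖ + Real.log ‖1 + Complex.I * ζ‖ + Real.log ‖1 + -ζ‖ +
      Real.log ‖1 + -(Complex.I * ζ)‖ ≤ ‖ζ‖ ^ 4 := by
  have hne : ∀ a : ℂ, ‖a‖ ≤ 1 / 2 → ‖1 + a‖ ≠ 0 := by
    intro a ha h0
    have := norm_sub_norm_le (1 : ℂ) (-a)
    rw [sub_neg_eq_add, norm_one, norm_neg, h0] at this
    linarith
  have hI : ‖Complex.I * ζ‖ ≤ 1 / 2 := by simpa using hζ
  have h1 := hne _ hζ
  have h2 := hne _ hI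
  have h3 := hne (-ζ) (by rwa [norm_neg])
  have h4 := hne (-(Complex.I * ζ)) (by rwa [norm_neg])
  rw [← Real.log_mul h1 h2, ← Real.log_mul (mul_ne_zero h1 h2) h3,
    ← Real.log_mul (mul_ne_zero (mul_ne_zero h1 h2) h3) h4, ← norm_mul, ← norm_mul, ← norm_mul]
  have e : (1 + ζ) * (1 + Complex.I * ζ) * (1 + -ζ) * (1 + -(Complex.I * ζ)) = 1 - ζ ^ 4 := by
    linear_combination (ζ ^ 4 - ζ ^ 2) * Complex.I_sq
  have hpos : 0 < ‖1 - ζ ^ 4‖ := by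
    rw [← e, norm_mul, norm_mul, norm_mul]; positivity
  rw [e]
  have := Real.log_le_sub_one_of_pos hpos
  have h5 := norm_sub_le (1 : ℂ) (ζ ^ 4)
  rw [norm_one, norm_pow] at h5
  linarith

theorem eventually_sum_exp_variationExponent_le {u : ℂ → ℝ} (hu : ContDiff ℝ 1 u)
    (hs : ∀ z, SquareSuperharmonicAt u z) {K : Set ℂ}
    (hK : IsCompact K) {P : ℝ} (hP : 0 ≤ P) {η : ℝ} (hη : 0 < η) :
    ∀ᶠ w : ℂ in nhds 0, ∀ x ∈ K, ∀ φ : ℂ, ‖φ‖ ≤ P →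
      squareSum (fun w => Real.exp (variationExponent u x φ w)) 0 w ≤ 4 + η * ‖w‖ ^ 2 := by
  obtain ⟨B, hB1, hB⟩ := exists_bound_variation hu hK hP
  set τ := Real.sqrt (η / 12) with hτ
  have hτpos : 0 < τ := by positivity
  have hτ2 : τ ^ 2 = η / 12 := Real.sq_sqrt (by positivity)
  obtain ⟨ε, hε, H⟩ := Metric.eventually_nhds_iff.1
    (eventually_abs_variationExponent_le hu hK hP hτpos)
  have h1 := eventually_forall_mul (eventually_squareSum_le hs hK
    (show 0 < η / (3 * (P + 1) ^ 2) by positivity)) P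
  have h2 : ∀ᶠ w : ℂ in nhds 0, B ^ 4 * ‖w‖ ^ 2 < η / 3 := by
    have : Continuous fun w : ℂ => B ^ 4 * ‖w‖ ^ 2 := by fun_prop
    exact (this.tendsto 0).eventually_lt_const (by simpa using hη)
  have h3 : ∀ᶠ w : ℂ in nhds 0, τ * ‖w‖ < 1 := by
    have : Continuous fun w : ℂ => τ * ‖w‖ := by fun_prop
    exact (this.tendsto 0).eventually_lt_const (by simp)
  filter_upwards [h1, h2, h3, Metric.ball_mem_nhds 0 hε] with w hw1 hw2 hw3 hw4 x hx φ hφ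
  have hY : ∀ a : ℂ, ‖a‖ = ‖w‖ → Real.exp (variationExponent u x φ a) ≤
      1 + variationExponent u x φ a + η / 12 * ‖w‖ ^ 2 := by
    intro a ha
    have h4 := (H (y := a) (by simpa [ha] using hw4) x hx φ hφ).2
    rw [ha] at h4
    have h5 := Real.abs_exp_sub_one_sub_id_le (h4.trans hw3.le)
    have h6 : variationExponent u x φ a ^ 2 ≤ (τ * ‖w‖) ^ 2 := by
      rw [← sq_abs]; gcongr
    rw [mul_pow, hτ2] at h6
    linarith [(abs_le.1 h5).2]
  have y1 := hY w rfl
  have y2 := hY (Complex.I * w) (by simp)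
  have y3 := hY (-w) (by simp)
  have y4 := hY (-(Complex.I * w)) (by simp)
  have hβ := (H (y := w) (by simpa using hw4) x hx φ hφ).1
  have hlog := sum_log_norm_one_add_le hβ
  have hsq := hw1 φ hφ x hx
  set β := 1 - complexGradient u x * φ with hβdef
  have hβ4 : ‖w * β‖ ^ 4 ≤ η / 3 * ‖w‖ ^ 2 := by
    calc ‖w * β‖ ^ 4 = ‖w‖ ^ 4 * ‖β‖ ^ 4 := by rw [norm_mul, mul_pow]
      _ ≤ ‖w‖ ^ 4 * B ^ 4 := by gcongr; exact hB x hx φ hφ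
      _ = B ^ 4 * ‖w‖ ^ 2 * ‖w‖ ^ 2 := by ring
      _ ≤ η / 3 * ‖w‖ ^ 2 := by gcongr
  have hφ2 : η / (3 * (P + 1) ^ 2) * ‖w * φ‖ ^ 2 ≤ η / 3 * ‖w‖ ^ 2 := by
    calc η / (3 * (P + 1) ^ 2) * ‖w * φ‖ ^ 2
        ≤ η / (3 * (P + 1) ^ 2) * (‖w‖ * (P + 1)) ^ 2 := by
          rw [norm_mul]; gcongr; linarith
      _ = η / 3 * ‖w‖ ^ 2 := by field_simp
  simp only [variationExponent, ← hβdef] at y1 y2 y3 y4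
  simp only [squareSum, zero_add, zero_sub, variationExponent, ← hβdef] at hsq ⊢
  simp only [neg_mul, Complex.neg_re, ← sub_eq_add_neg, mul_assoc] at y1 y2 y3 y4 hlog hsq ⊢
  linarith

theorem conformalSpeed_variation {u : ℂ → ℝ} {γ φ : ℝ → ℂ} (hγ : ContDiff ℝ 1 γ) {t : ℝ}
    (hφ : HasDerivAt φ (deriv γ t * (1 - complexGradient u (γ t) * φ t)) t) {w : ℂ}
    (hw : ‖w * (1 - complexGradient u (γ t) * φ t)‖ ≤ 1 / 2) :
    conformalSpeed u (fun s => γ s + w * φ s) t =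
      Real.exp w.re * (Real.exp (variationExponent u (γ t) (φ t) w) * conformalSpeed u γ t) := by
  set β := 1 - complexGradient u (γ t) * φ t with hβ
  have hd : HasDerivAt (fun s => γ s + w * φ s) (deriv γ t + w * (deriv γ t * β)) t :=
    (hγ.differentiable one_ne_zero t).hasDerivAt.add (hφ.const_mul w)
  have hne : 0 < ‖1 + w * β‖ := by
    have := norm_sub_norm_le (1 : ℂ) (-(w * β))
    rw [sub_neg_eq_add, norm_one, norm_neg] at this
    linarith
  have e : deriv γ t + w * (deriv γ t * β) = deriv γ t * (1 + w * β) := by ring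
  have hee : Real.exp (u (γ t + w * φ t)) * ‖1 + w * β‖ =
      Real.exp w.re * Real.exp (variationExponent u (γ t) (φ t) w) * Real.exp (u (γ t)) := by
    rw [variationExponent, ← hβ, ← Real.exp_log hne, Real.log_exp, ← Real.exp_add,
      ← Real.exp_add, ← Real.exp_add]
    ring_nf
  rw [conformalSpeed, conformalSpeed, hd.deriv, e, norm_mul]
  linear_combination ‖deriv γ t‖ * hee

/-- An almost minimizing curve from `o` to `z` together with its variation field. -/
structure IsVariation (u : ℂ → ℝ) (K : Set ℂ) (P : ℝ) (o z : ℂ) (l : ℝ) (γ φ : ℝ → ℂ) : Prop where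
  contDiff : ContDiff ℝ 1 γ
  contDiff' : ContDiff ℝ 1 φ
  map_zero : γ 0 = o
  map_one : γ 1 = z
  field_zero : φ 0 = 0
  hasDerivAt : ∀ t, HasDerivAt φ (deriv γ t * (1 - complexGradient u (γ t) * φ t)) t
  mem : ∀ t ∈ Set.Icc (0 : ℝ) 1, γ t ∈ K
  norm_le : ∀ t ∈ Set.Icc (0 : ℝ) 1, ‖φ t‖ ≤ P
  length_le : ∫ t in (0 : ℝ)..1, conformalSpeed u γ t ≤ l

theorem exists_isVariation {u : ℂ → ℝ} (hu : ContDiff ℝ 1 u) (hcomp : IsConformallyComplete u)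
    (o : ℂ) (D : ℝ) : ∃ R P : ℝ, 0 ≤ P ∧ ∀ z l, conformalDist u o z < l → l ≤ D →
      ∃ γ φ, IsVariation u (closedBall 0 R) P o z l γ φ := by
  obtain ⟨R, hR⟩ := (hcomp.isBounded hu.continuous o D).exists_norm_le
  obtain ⟨N, hN⟩ := (isCompact_closedBall (0 : ℂ) R).exists_bound_of_continuousOn
    (f := fun z => Real.exp (-u z)) (by have := hu.continuous; fun_prop)
  refine ⟨R, |N| * |D|, by positivity, fun z l hl hlD => ?_⟩
  obtain ⟨γ, hγ, hlt⟩ := exists_isRestingPath_lt hu.continuous hl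
  obtain ⟨φ, hφ0, hφd, hφb⟩ := exists_variationField hu hγ.contDiff
  have hc := continuous_conformalSpeed hu.continuous hγ.contDiff
  have hlen : ∀ t ∈ Set.Icc (0 : ℝ) 1, ∫ s in (0 : ℝ)..t, conformalSpeed u γ s < D := by
    intro t ht
    refine lt_of_le_of_lt ?_ (hlt.trans_le hlD)
    exact intervalIntegral.integral_mono_interval le_rfl ht.1 ht.2
      (ae_of_all _ fun t => conformalSpeed_nonneg u _ t) (hc.intervalIntegrable _ _)
  have hmem : ∀ t ∈ Set.Icc (0 : ℝ) 1, γ t ∈ closedBall (0 : ℂ) R := by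
    intro t ht
    have h1 := conformalDist_le_integral hu.continuous hγ.contDiff ht.1
    rw [hγ.eq_left 0 le_rfl] at h1
    simpa using hR (γ t) (h1.trans_lt (hlen t ht))
  refine ⟨γ, φ, hγ.contDiff, ?_, hγ.eq_left 0 le_rfl, hγ.eq_right 1 le_rfl, hφ0, hφd, hmem,
    fun t ht => ?_, hlt.le⟩
  · rw [contDiff_one_iff_deriv]
    refine ⟨fun t => (hφd t).differentiableAt, ?_⟩
    have h1 : deriv φ = fun t => deriv γ t * (1 - complexGradient u (γ t) * φ t) :=
      funext fun t => (hφd t).deriv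
    have h2 : Continuous φ := continuous_iff_continuousAt.2 fun t => (hφd t).continuousAt
    have h3 := (continuous_complexGradient hu).comp hγ.contDiff.continuous
    have h4 : Continuous (deriv γ) := hγ.contDiff.continuous_deriv le_rfl
    rw [h1]
    exact h4.mul (continuous_const.sub (h3.mul h2))
  · refine (hφb t ht.1).trans ?_
    have h1 := hN (γ t) (hmem t ht)
    rw [Real.norm_eq_abs, Real.abs_exp] at h1
    gcongr
    · exact intervalIntegral.integral_nonneg ht.1 fun t _ => conformalSpeed_nonneg u γ t
    · exact h1.trans (le_abs_self N)
    · exact (hlen t ht).le.trans (le_abs_self D)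

namespace IsVariation

variable {u : ℂ → ℝ} {K : Set ℂ} {P : ℝ} {o z : ℂ} {l : ℝ} {γ φ : ℝ → ℂ}

theorem contDiff_add_mul (h : IsVariation u K P o z l γ φ) (w : ℂ) :
    ContDiff ℝ 1 fun t => γ t + w * φ t :=
  h.contDiff.add (contDiff_const.mul h.contDiff')

theorem conformalDist_le (h : IsVariation u K P o z l γ φ) (hu : Continuous u) (w : ℂ) :
    conformalDist u o (z + w * φ 1) ≤
      ∫ t in (0 : ℝ)..1, conformalSpeed u (fun s => γ s + w * φ s) t := by
  simpa [h.map_zero, h.map_one, h.field_zero] using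
    conformalDist_le_integral hu (h.contDiff_add_mul w) zero_le_one

theorem conformalDist_le_exp_mul (h : IsVariation u K P o z l γ φ) (hu : Continuous u) {w : ℂ}
    {b : ℝ} (hw : ∀ x ∈ K, ∀ φ : ℂ, ‖φ‖ ≤ P → ‖w * (1 - complexGradient u x * φ)‖ ≤ 1 / 2 ∧
      |variationExponent u x φ w| ≤ b) :
    conformalDist u o (z + w * φ 1) ≤ Real.exp (w.re + b) * l := by
  refine (h.conformalDist_le hu w).trans ?_
  calc ∫ t in (0 : ℝ)..1, conformalSpeed u (fun s => γ s + w * φ s) t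
      ≤ ∫ t in (0 : ℝ)..1, Real.exp (w.re + b) * conformalSpeed u γ t := by
        refine intervalIntegral.integral_mono_on zero_le_one
          ((continuous_conformalSpeed hu (h.contDiff_add_mul w)).intervalIntegrable _ _)
          (((continuous_conformalSpeed hu h.contDiff).const_mul _).intervalIntegrable _ _)
          fun t ht => ?_
        obtain ⟨h1, h2⟩ := hw _ (h.mem t ht) _ (h.norm_le t ht)
        rw [conformalSpeed_variation h.contDiff (h.hasDerivAt t) h1, ← mul_assoc, ← Real.exp_add]
        have := conformalSpeed_nonneg u γ t
        gcongr
        exact (abs_le.1 h2).2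
    _ ≤ Real.exp (w.re + b) * l := by
      rw [intervalIntegral.integral_const_mul]
      have := h.length_le
      gcongr

theorem squareSum_exp_mul_conformalDist_le (h : IsVariation u K P o z l γ φ) (hu : Continuous u)
    {w : ℂ} {b : ℝ} (hb : 0 ≤ b)
    (hw : ∀ x ∈ K, ∀ φ : ℂ, ‖φ‖ ≤ P → ‖w * (1 - complexGradient u x * φ)‖ ≤ 1 / 2)
    (hsum : ∀ x ∈ K, ∀ φ : ℂ, ‖φ‖ ≤ P →
      squareSum (fun w => Real.exp (variationExponent u x φ w)) 0 w ≤ b) :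
    squareSum (fun a => Real.exp (-a.re) * conformalDist u o (z + a * φ 1)) 0 w ≤ b * l := by
  set S : ℂ → ℝ → ℝ := fun a t => Real.exp (-a.re) * conformalSpeed u (fun s => γ s + a * φ s) t
    with hS
  have hSi : ∀ a, IntervalIntegrable (S a) volume 0 1 := fun a =>
    (((continuous_conformalSpeed hu (h.contDiff_add_mul a)).const_mul _).intervalIntegrable _ _)
  have hle : ∀ a : ℂ, Real.exp (-a.re) * conformalDist u o (z + a * φ 1) ≤
      ∫ t in (0 : ℝ)..1, S a t := by
    intro a
    rw [hS, intervalIntegral.integral_const_mul]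
    exact mul_le_mul_of_nonneg_left (h.conformalDist_le hu a) (Real.exp_pos _).le
  have hval : ∀ a : ℂ, ‖a‖ = ‖w‖ → ∀ t ∈ Set.Icc (0 : ℝ) 1,
      S a t = Real.exp (variationExponent u (γ t) (φ t) a) * conformalSpeed u γ t := by
    intro a ha t ht
    have h1 := hw _ (h.mem t ht) _ (h.norm_le t ht)
    rw [norm_mul, ← ha, ← norm_mul] at h1
    simp only [hS]
    rw [conformalSpeed_variation h.contDiff (h.hasDerivAt t) h1, ← mul_assoc, ← Real.exp_add]
    simp
  have hint : ∫ t in (0 : ℝ)..1, (S w t + S (Complex.I * w) t + S (-w) t + S (-(Complex.I * w)) t)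
      ≤ ∫ t in (0 : ℝ)..1, b * conformalSpeed u γ t := by
    refine intervalIntegral.integral_mono_on zero_le_one
      ((((hSi _).add (hSi _)).add (hSi _)).add (hSi _))
      (((continuous_conformalSpeed hu h.contDiff).const_mul _).intervalIntegrable _ _)
      fun t ht => ?_
    rw [hval w rfl t ht, hval (Complex.I * w) (by simp) t ht, hval (-w) (by simp) t ht,
      hval (-(Complex.I * w)) (by simp) t ht]
    have h1 := hsum _ (h.mem t ht) _ (h.norm_le t ht)
    simp only [squareSum, zero_add, zero_sub] at h1
    have := mul_le_mul_of_nonneg_right h1 (conformalSpeed_nonneg u γ t)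
    linarith
  rw [intervalIntegral.integral_add (((hSi _).add (hSi _)).add (hSi _)) (hSi _),
    intervalIntegral.integral_add ((hSi _).add (hSi _)) (hSi _),
    intervalIntegral.integral_add (hSi _) (hSi _),
    intervalIntegral.integral_const_mul b (conformalSpeed u γ)] at hint
  have h1 := mul_le_mul_of_nonneg_left h.length_le hb
  simp only [squareSum, zero_add, zero_sub]
  linarith [hle w, hle (Complex.I * w), hle (-w), hle (-(Complex.I * w))]

theorem squareSum_log_conformalDist_le (h : IsVariation u K P o z l γ φ) (hu : Continuous u)
    {w : ℂ} {b : ℝ} (hb : 0 ≤ b) (hl : 0 < l)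
    (hw : ∀ x ∈ K, ∀ φ : ℂ, ‖φ‖ ≤ P → ‖w * (1 - complexGradient u x * φ)‖ ≤ 1 / 2)
    (hsum : ∀ x ∈ K, ∀ φ : ℂ, ‖φ‖ ≤ P →
      squareSum (fun w => Real.exp (variationExponent u x φ w)) 0 w ≤ 4 + b)
    (hpos : ∀ a : ℂ, ‖a‖ = ‖w * φ 1‖ → 0 < conformalDist u o (z + a)) :
    squareSum (fun x => Real.log (conformalDist u o x)) z (w * φ 1) ≤ 4 * Real.log l + b := by
  have h1 := h.squareSum_exp_mul_conformalDist_le hu (by linarith) hw hsum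
  have hlog : ∀ a : ℂ, ‖a‖ = ‖w‖ → Real.log (conformalDist u o (z + a * φ 1)) ≤
      a.re + Real.log l + Real.exp (-a.re) * conformalDist u o (z + a * φ 1) / l - 1 := by
    intro a ha
    have h2 := hpos (a * φ 1) (by rw [norm_mul, ha, norm_mul])
    have h3 := Real.log_le_sub_one_of_pos
      (show 0 < Real.exp (-a.re) * conformalDist u o (z + a * φ 1) / l by positivity)
    rw [Real.log_div (by positivity) hl.ne', Real.log_mul (by positivity) h2.ne',
      Real.log_exp] at h3
    linarith
  have y1 := hlog w rfl
  have y2 := hlog (Complex.I * w) (by simp)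
  have y3 := hlog (-w) (by simp)
  have y4 := hlog (-(Complex.I * w)) (by simp)
  have h4 : squareSum (fun a => Real.exp (-a.re) * conformalDist u o (z + a * φ 1)) 0 w / l
      ≤ 4 + b := by
    rwa [div_le_iff₀ hl]
  simp only [squareSum, zero_add, zero_sub, add_div] at h4
  simp only [squareSum, sub_eq_add_neg]
  simp only [neg_mul, mul_assoc, Complex.neg_re] at y1 y2 y3 y4 h4 ⊢
  linarith

theorem le_norm_field {P' : ℝ} (h : IsVariation u (closedBall 0 P') P o z l γ φ) (hu : Continuous u)
    {s M : ℝ} (hs : 0 < s) (hs' : s ≤ 1 / 2) (hP : 0 ≤ P)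
    (hM : ∀ x ∈ closedBall (0 : ℂ) (P' + P), Real.exp (u x) ≤ M)
    (hw : ∀ x ∈ closedBall (0 : ℂ) P', ∀ φ : ℂ, ‖φ‖ ≤ P →
      ‖(-s : ℂ) * (1 - complexGradient u x * φ)‖ ≤ 1 / 2 ∧
      |variationExponent u x φ (-s)| ≤ 1 / 4 * s)
    (hl : l ≤ conformalDist u o z * (1 + s / 4)) :
    conformalDist u o z / 4 ≤ M * ‖φ 1‖ := by
  have hφ := h.norm_le 1 (by simp)
  have hz : ‖z‖ ≤ P' := by simpa [h.map_one] using h.mem 1 (by simp)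
  have h1 := h.conformalDist_le_exp_mul hu hw
  have h2 : conformalDist u (z + (-s : ℂ) * φ 1) z ≤ M * (s * ‖φ 1‖) := by
    have := conformalDist_le_mul_norm hu (a := z + (-s : ℂ) * φ 1) (b := z) (M := M)
      fun x hx => hM x ((convex_closedBall _ _).segment_subset ?_ ?_ hx)
    · refine this.trans_eq ?_
      rw [sub_add_cancel_left, norm_neg, norm_mul, norm_neg, Complex.norm_real,
        Real.norm_of_nonneg hs.le]
    · rw [mem_closedBall_zero_iff]
      refine (norm_add_le _ _).trans ?_
      rw [norm_mul, norm_neg, Complex.norm_real, Real.norm_of_nonneg hs.le]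
      nlinarith [norm_nonneg (φ 1)]
    · rw [mem_closedBall_zero_iff]; linarith
  have h3 := conformalDist_triangle hu o (z + (-s : ℂ) * φ 1) z
  have h4 : Real.exp ((-s : ℂ).re + 1 / 4 * s) ≤ 1 - s / 2 := by
    have h5 : (-s : ℂ).re + 1 / 4 * s = -(3 / 4 * s) := by simp; ring
    rw [h5, Real.exp_neg]
    refine (inv_anti₀ (by positivity) (Real.add_one_le_exp (3 / 4 * s))).trans ?_
    rw [inv_le_iff_one_le_mul₀ (by positivity)]
    nlinarith
  have hd := conformalDist_nonneg u o z
  have hl0 : 0 ≤ l := le_trans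
    (intervalIntegral.integral_nonneg zero_le_one fun t _ => conformalSpeed_nonneg u γ t)
    h.length_le
  have h6 : conformalDist u o z ≤ (1 - s / 2) * (conformalDist u o z * (1 + s / 4)) +
      M * (s * ‖φ 1‖) := by
    have := mul_le_mul_of_nonneg_right h4 hl0
    have := mul_le_mul_of_nonneg_left hl (show 0 ≤ 1 - s / 2 by linarith)
    linarith
  have h7 : s * (conformalDist u o z / 4) ≤ s * (M * ‖φ 1‖) := by
    nlinarith [mul_nonneg hd (sq_nonneg s)]
  exact le_of_mul_le_mul_left h7 hs

end IsVariation

theorem conformalDist_pos {u : ℂ → ℝ} (hu : Continuous u) {o z : ℂ} (h : z ≠ o) :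
    0 < conformalDist u o z := by
  have hρ : 0 < ‖z - o‖ := norm_pos_iff.2 (sub_ne_zero.2 h)
  obtain ⟨x, -, hx⟩ := (isCompact_closedBall o ‖z - o‖).exists_isMinOn
    (nonempty_closedBall.2 hρ.le) hu.continuousOn
  exact lt_of_lt_of_le (by positivity) (mul_le_conformalDist hu (Real.exp_pos (u x)).le
    (fun y hy => Real.exp_le_exp.2 (hx hy)) le_rfl)

/-- For a complete metric of nonnegative curvature, the logarithm of the distance from a point is
superharmonic. -/
theorem squareSuperharmonicAt_log_conformalDist {u : ℂ → ℝ} (hu : ContDiff ℝ 2 u)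
    (hlap : ∀ z, complexLap u z ≤ 0) (hcomp : IsConformallyComplete u) {o z₀ : ℂ} (h : z₀ ≠ o) :
    SquareSuperharmonicAt (fun z => Real.log (conformalDist u o z)) z₀ := by
  intro η hη
  have hu1 : ContDiff ℝ 1 u := hu.of_le one_le_two
  have huc := hu.continuous
  have hdc := continuous_conformalDist huc o
  have hs : ∀ z, SquareSuperharmonicAt u z := fun z =>
    hu.contDiffAt.squareSuperharmonicAt (hlap z)
  have hd := conformalDist_pos huc h
  set d := conformalDist u o z₀ with hddef
  obtain ⟨R, P, hP, hvar⟩ := exists_isVariation hu1 hcomp o (2 * d)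
  have hK : IsCompact (closedBall (0 : ℂ) R) := isCompact_closedBall _ _
  obtain ⟨M, hM⟩ := (isCompact_closedBall (0 : ℂ) (R + P)).exists_bound_of_continuousOn
    (f := fun z => Real.exp (u z)) (by fun_prop)
  have hM' : ∀ x ∈ closedBall (0 : ℂ) (R + P), Real.exp (u x) ≤ max M 1 := fun x hx =>
    (le_abs_self _).trans ((hM x hx).trans (le_max_left _ _))
  have hM1 : 1 ≤ max M 1 := le_max_right _ _
  set N := max M 1 with hN
  obtain ⟨ε, hε, hw⟩ := Metric.eventually_nhds_iff.1
    (eventually_abs_variationExponent_le hu1 hK hP (show (0 : ℝ) < 1 / 4 by norm_num))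
  set s := min (ε / 2) (1 / 2) with hsdef
  have hs0 : 0 < s := by positivity
  have hsε : s < ε := (min_le_left _ _).trans_lt (by linarith)
  set c := d / (8 * N) with hc
  have hc0 : 0 < c := by positivity
  obtain ⟨δ, hδ, hw'⟩ := Metric.eventually_nhds_iff.1
    (eventually_sum_exp_variationExponent_le hu1 hs hK hP
      (show 0 < η / 2 * c ^ 2 by positivity))
  obtain ⟨ρ, hρ, hnear⟩ := Metric.eventually_nhds_iff.1
    (show ∀ᶠ y in nhds z₀, d / 2 < conformalDist u o y ∧ conformalDist u o y < 2 * d from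
      (hdc.continuousAt.eventually_const_lt (half_lt_self hd)).and
        (hdc.continuousAt.eventually_lt_const (by linarith)))
  set r := min (ρ / 2) (min δ ε * c) with hr
  have hr0 : 0 < r := by positivity
  filter_upwards [Metric.ball_mem_nhds (z₀, (0 : ℂ)) hr0] with p hp
  obtain ⟨z, k⟩ := p
  rw [mem_ball, Prod.dist_eq, max_lt_iff, dist_zero_right] at hp
  obtain ⟨hz, hk⟩ := hp
  simp only at hz hk ⊢
  have hnear' : ∀ a : ℂ, ‖a‖ ≤ ‖k‖ →
      d / 2 < conformalDist u o (z + a) ∧ conformalDist u o (z + a) < 2 * d := by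
    intro a ha
    refine hnear ?_
    have h1 : dist (z + a) z = ‖a‖ := by simp
    have := dist_triangle (z + a) z z₀
    have := min_le_left (ρ / 2) (min δ ε * c)
    linarith
  have hz1 := hnear' 0 (by simp)
  rw [add_zero] at hz1
  have hdz : 0 < conformalDist u o z := by linarith
  rcases eq_or_ne k 0 with rfl | hk0
  · simp only [squareSum, mul_zero, add_zero, sub_zero, norm_zero]
    apply le_of_eq; ring
  have hkpos : 0 < ‖k‖ := norm_pos_iff.2 hk0
  obtain ⟨l, hl1, hl2⟩ := exists_between (show conformalDist u o z <
      min (conformalDist u o z * (1 + s / 4))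
        (min (conformalDist u o z * Real.exp (η / 8 * ‖k‖ ^ 2)) (2 * d)) by
    refine lt_min ?_ (lt_min ?_ hz1.2)
    · exact lt_mul_of_one_lt_right hdz (by linarith)
    · exact lt_mul_of_one_lt_right hdz (Real.one_lt_exp_iff.2 (by positivity)))
  rw [lt_min_iff, lt_min_iff] at hl2
  obtain ⟨hl2, hl3, hl4⟩ := hl2
  obtain ⟨γ, φ, hv⟩ := hvar z l hl1 hl4.le
  have hsnorm : ‖(-s : ℂ)‖ = s := by
    rw [norm_neg, Complex.norm_real, Real.norm_of_nonneg hs0.le]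
  have hζ : c ≤ ‖φ 1‖ := by
    have h1 := hv.le_norm_field huc hs0 (min_le_right _ _) hP hM' (fun x hx φ hφ => by
      have := hw (y := (-s : ℂ)) (by rwa [dist_zero_right, hsnorm]) x hx φ hφ
      rwa [hsnorm] at this) hl2.le
    rw [hc, div_le_iff₀ (by positivity)]
    linarith
  have hζ0 : φ 1 ≠ 0 := norm_pos_iff.1 (hc0.trans_le hζ)
  have hwk : k / φ 1 * φ 1 = k := div_mul_cancel₀ _ hζ0
  have hwn : ‖k / φ 1‖ ≤ ‖k‖ / c := by
    rw [norm_div]; gcongr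
  have hwlt : ‖k / φ 1‖ < min δ ε := by
    refine hwn.trans_lt ?_
    rw [div_lt_iff₀ hc0]
    exact hk.trans_le (min_le_right _ _)
  have hfin := hv.squareSum_log_conformalDist_le huc (w := k / φ 1)
    (b := η / 2 * c ^ 2 * ‖k / φ 1‖ ^ 2) (by positivity) (hdz.trans hl1)
    (fun x hx φ hφ => (hw (by rw [dist_zero_right]; exact hwlt.trans_le (min_le_right _ _))
      x hx φ hφ).1)
    (hw' (by rw [dist_zero_right]; exact hwlt.trans_le (min_le_left _ _)))
    (fun a ha => by
      rw [hwk] at ha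
      have := hnear' a ha.le
      linarith)
  rw [hwk] at hfin
  refine hfin.trans ?_
  have h5 : η / 2 * c ^ 2 * ‖k / φ 1‖ ^ 2 ≤ η / 2 * ‖k‖ ^ 2 := by
    calc η / 2 * c ^ 2 * ‖k / φ 1‖ ^ 2 ≤ η / 2 * c ^ 2 * (‖k‖ / c) ^ 2 := by gcongr
      _ = η / 2 * ‖k‖ ^ 2 := by field_simp
  have h6 : Real.log l ≤ Real.log (conformalDist u o z) + η / 8 * ‖k‖ ^ 2 := by
    rw [← Real.log_exp (η / 8 * ‖k‖ ^ 2), ← Real.log_mul hdz.ne' (Real.exp_pos _).ne']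
    exact Real.log_le_log (hdz.trans hl1) hl3.le
  linarith

/-- A function which stays above `b` on a disc, and whose circular means about the center stay
below `b + t`, has a small integral over every smaller disc. -/
theorem setIntegral_ball_sub_le {q : ℂ → ℝ} (hc : Continuous q) {c y : ℂ} {R s b t : ℝ}
    (hR : 0 ≤ R) (hsub : ball y s ⊆ ball c R) (hb : ∀ z ∈ ball c R, b ≤ q z)
    (hm : ∀ r ∈ Set.Icc 0 R, Real.circleAverage q c r ≤ b + t) :
    ∫ z in ball y s, (q z - b) ≤ Real.pi * R ^ 2 * t := by
  have hcb : Continuous fun z => q z - b := by fun_prop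
  have hi : IntegrableOn (fun z => q z - b) (ball c R) :=
    (hcb.continuousOn.integrableOn_compact
      (isCompact_closedBall c R)).mono_set ball_subset_closedBall
  refine (setIntegral_mono_set hi ?_ hsub.eventuallyLE).trans ?_
  · filter_upwards [ae_restrict_mem measurableSet_ball] with z hz
    exact sub_nonneg.2 (hb z hz)
  · refine setIntegral_ball_le_of_circleAverage_le hcb hR fun r hr => ?_
    have h1 : Real.circleAverage (fun z => q z - b) c r = Real.circleAverage q c r - b := by
      rw [Real.circleAverage_fun_sub hc.continuousOn.circleIntegrable'
        continuousOn_const.circleIntegrable', Real.circleAverage_const]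
    linarith [hm r hr]

theorem volume_ball_toReal (c : ℂ) {r : ℝ} (hr : 0 ≤ r) :
    volume.real (ball c r) = Real.pi * r ^ 2 := by
  rw [Measure.real, Complex.volume_ball]
  simp [hr, mul_comm]

/-- The logarithm of the ratio of the distances from `o` in the conformal and in the flat metric. -/
noncomputable def logDistRatio (u : ℂ → ℝ) (o z : ℂ) : ℝ :=
  open Classical in
  if z = o then u o else Real.log (conformalDist u o z) - Real.log ‖z - o‖

theorem logDistRatio_self (u : ℂ → ℝ) (o : ℂ) : logDistRatio u o o = u o := if_pos rfl

theorem logDistRatio_of_ne (u : ℂ → ℝ) {o z : ℂ} (h : z ≠ o) :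
    logDistRatio u o z = Real.log (conformalDist u o z) - Real.log ‖z - o‖ := if_neg h

theorem conformalDist_eq_exp_mul {u : ℂ → ℝ} (hu : Continuous u) (o z : ℂ) :
    conformalDist u o z = Real.exp (logDistRatio u o z) * ‖z - o‖ := by
  rcases eq_or_ne z o with rfl | h
  · rw [conformalDist_self hu]; simp
  · have h1 : 0 < ‖z - o‖ := norm_pos_iff.2 (sub_ne_zero.2 h)
    rw [logDistRatio_of_ne u h, Real.exp_sub, Real.exp_log (conformalDist_pos hu h),
      Real.exp_log h1]
    field_simp

theorem continuous_logDistRatio {u : ℂ → ℝ} (hu : Continuous u) (o : ℂ) :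
    Continuous (logDistRatio u o) := by
  rw [continuous_iff_continuousAt]
  intro z
  rcases eq_or_ne z o with rfl | h
  · rw [Metric.continuousAt_iff']
    intro ε hε
    obtain ⟨δ, hδ, H⟩ := Metric.continuousAt_iff.1 (hu.continuousAt (x := z)) (ε / 2) (half_pos hε)
    filter_upwards [ball_mem_nhds z hδ] with y hy
    rcases eq_or_ne y z with rfl | hne
    · simpa
    have hr : 0 < ‖y - z‖ := norm_pos_iff.2 (sub_ne_zero.2 hne)
    have hball : ∀ x ∈ closedBall z ‖y - z‖, |u x - u z| < ε / 2 := fun x hx =>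
      H ((mem_closedBall.1 hx).trans_lt (by rwa [← dist_eq_norm]))
    have h1 := mul_le_conformalDist hu (Real.exp_pos (u z - ε / 2)).le
      (fun x hx => Real.exp_le_exp.2 (by linarith [(abs_lt.1 (hball x hx)).1])) (le_refl ‖y - z‖)
    have h2 : conformalDist u z y ≤ Real.exp (u z + ε / 2) * ‖y - z‖ :=
      conformalDist_le_mul_norm hu fun x hx => Real.exp_le_exp.2 (by
        have := hball x ((convex_closedBall z _).segment_subset
          (mem_closedBall_self hr.le) (by simp [dist_eq_norm]) hx)
        linarith [(abs_lt.1 this).2])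
    rw [conformalDist_eq_exp_mul hu] at h1 h2
    have h3 := Real.exp_le_exp.1 (le_of_mul_le_mul_right h1 hr)
    have h4 := Real.exp_le_exp.1 (le_of_mul_le_mul_right h2 hr)
    rw [logDistRatio_self, Real.dist_eq, abs_lt]
    constructor <;> linarith
  · have h1 : ContinuousAt (fun z => Real.log (conformalDist u o z) - Real.log ‖z - o‖) z :=
      ((continuous_conformalDist hu o).continuousAt.log (conformalDist_pos hu h).ne').sub
        ((by fun_prop : ContinuousAt (fun z : ℂ => ‖z - o‖) z).log
          (norm_ne_zero_iff.2 (sub_ne_zero.2 h)))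
    refine h1.congr ?_
    filter_upwards [isOpen_ne.mem_nhds h] with y hy
    exact (logDistRatio_of_ne u hy).symm

theorem squareSuperharmonicAt_logDistRatio {u : ℂ → ℝ} (hu : ContDiff ℝ 2 u)
    (hlap : ∀ z, complexLap u z ≤ 0) (hcomp : IsConformallyComplete u) {o z : ℂ} (h : z ≠ o) :
    SquareSuperharmonicAt (logDistRatio u o) z := by
  refine ((squareSuperharmonicAt_log_conformalDist hu hlap hcomp h).add
    (squareSuperharmonicAt_const_mul_log (-1) h)).congr ?_
  filter_upwards [isOpen_ne.mem_nhds h] with y hy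
  rw [logDistRatio_of_ne u hy]
  ring

theorem exists_logDistRatio_lower_bound {u : ℂ → ℝ} (hu : ContDiff ℝ 2 u)
    (hlap : ∀ z, complexLap u z ≤ 0) (hcomp : IsConformallyComplete u) {o : ℂ} {r : ℝ}
    (hr : 0 < r) (ho : ‖o‖ ≤ r) :
    ∃ b ≤ u o, (∀ z ∈ ball (0 : ℂ) (2 * r), b ≤ logDistRatio u o z) ∧
      ∫ z in ball (0 : ℂ) (2 * r), (logDistRatio u o z - b) ≤ 32 * Real.pi * r ^ 2 := by
  have huc := hu.continuous
  have hqc := continuous_logDistRatio huc o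
  have hq : ∀ z ≠ o, SquareSuperharmonicAt (logDistRatio u o) z := fun z hz =>
    squareSuperharmonicAt_logDistRatio hu hlap hcomp hz
  obtain ⟨y, hy, hmin⟩ := exists_mem_sphere_conformalDist_le huc o hr.le
  obtain ⟨x, hx, hxmin⟩ := (isCompact_sphere o (5 * r)).exists_isMinOn
    (NormedSpace.sphere_nonempty.2 (by positivity)) hqc.continuousOn
  have hb := le_of_squareSuperharmonicAt_punctured hqc hq (R := 5 * r) (by positivity)
    (fun z hz => hxmin hz)
  rw [mem_sphere, dist_eq_norm] at hx hy
  have hyo : y ≠ o := by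
    rintro rfl; simp at hy; linarith
  have hxo : x ≠ o := by
    rintro rfl; simp at hx; linarith
  have hyb : logDistRatio u o y ≤ logDistRatio u o x + 2 := by
    rw [logDistRatio_of_ne u hyo, logDistRatio_of_ne u hxo, hx, hy,
      Real.log_mul (by norm_num) hr.ne']
    have h1 := Real.log_le_log (conformalDist_pos huc hyo) (hmin x (by rw [hx]; linarith))
    have h2 : Real.log 5 ≤ 2 := by
      rw [Real.log_le_iff_le_exp (by norm_num)]
      have := Real.exp_one_gt_d9
      rw [show (2 : ℝ) = 1 + 1 by norm_num, Real.exp_add]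
      nlinarith
    linarith
  have hsub1 : ball (0 : ℂ) (2 * r) ⊆ ball y (4 * r) := by
    intro z hz
    rw [mem_ball, dist_zero_right] at hz
    rw [mem_ball, dist_eq_norm]
    have h1 := norm_sub_le z y
    have h2 := norm_add_le (y - o) o
    rw [sub_add_cancel] at h2
    linarith
  have hsub2 : ball y (4 * r) ⊆ closedBall o (5 * r) := by
    refine ball_subset_closedBall.trans (closedBall_subset_closedBall' ?_)
    rw [dist_eq_norm, hy]; linarith
  refine ⟨logDistRatio u o x, ?_, fun z hz => hb z (hsub2 (hsub1 hz)), ?_⟩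
  · have := hb o (mem_closedBall_self (by positivity))
    rwa [logDistRatio_self] at this
  · have := setIntegral_ball_sub_le hqc (t := 2) (by positivity) hsub1
      (fun z hz => hb z (hsub2 hz)) fun s hs =>
        (circleAverage_le_of_squareSuperharmonicAt_punctured hqc hq hyo hs.1).trans hyb
    linarith

/-- In a complete metric of nonnegative curvature, two points are at most as far apart as the
conformal factor at these two points suggests. -/
theorem exists_conformalDist_le_add_exp {u : ℂ → ℝ} (hu : ContDiff ℝ 2 u)
    (hlap : ∀ z, complexLap u z ≤ 0) (hcomp : IsConformallyComplete u) :
    ∃ C : ℝ, 0 < C ∧ ∀ (r : ℝ) (o o' : ℂ), 0 < r → ‖o‖ ≤ r → ‖o'‖ ≤ r →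
      conformalDist u o o' ≤ C * r * (Real.exp (u o) + Real.exp (u o')) := by
  refine ⟨3 * Real.exp 17, by positivity, fun r o o' hr ho ho' => ?_⟩
  have huc := hu.continuous
  obtain ⟨b, hbo, hb, hi⟩ := exists_logDistRatio_lower_bound hu hlap hcomp hr ho
  obtain ⟨b', hbo', hb', hi'⟩ := exists_logDistRatio_lower_bound hu hlap hcomp hr ho'
  have hq := continuous_logDistRatio huc o
  have hq' := continuous_logDistRatio huc o'
  have hint : ∀ f : ℂ → ℝ, Continuous f → IntegrableOn f (ball (0 : ℂ) (2 * r)) := fun f hf =>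
    (hf.continuousOn.integrableOn_compact (isCompact_closedBall _ _)).mono_set
      ball_subset_closedBall
  have hex : ∃ y ∈ ball (0 : ℂ) (2 * r),
      (logDistRatio u o y - b) + (logDistRatio u o' y - b') ≤ 17 := by
    by_contra! hcon
    have h1 : ∫ z in ball (0 : ℂ) (2 * r), (17 : ℝ) ≤ ∫ z in ball (0 : ℂ) (2 * r),
        ((logDistRatio u o z - b) + (logDistRatio u o' z - b')) :=
      setIntegral_mono_on (hint _ continuous_const) (hint _ (by fun_prop)) measurableSet_ball
        fun z hz => (hcon z hz).le
    rw [setIntegral_const, volume_ball_toReal _ (by positivity), smul_eq_mul,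
      integral_add (hint _ (by fun_prop)) (hint _ (by fun_prop))] at h1
    have : 0 < Real.pi * r ^ 2 := by positivity
    nlinarith
  obtain ⟨y, hy, hy17⟩ := hex
  have key : ∀ p : ℂ, ‖p‖ ≤ r → logDistRatio u p y ≤ u p + 17 →
      conformalDist u p y ≤ 3 * Real.exp 17 * r * Real.exp (u p) := by
    intro p hp hqy
    rw [conformalDist_eq_exp_mul huc]
    rw [mem_ball, dist_zero_right] at hy
    have h1 : ‖y - p‖ ≤ 3 * r := (norm_sub_le _ _).trans (by linarith)
    have h2 := Real.exp_le_exp.2 hqy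
    rw [Real.exp_add] at h2
    calc Real.exp (logDistRatio u p y) * ‖y - p‖ ≤
        (Real.exp (u p) * Real.exp 17) * (3 * r) := by gcongr
      _ = _ := by ring
  have h1 := key o ho (by linarith [hb' y hy])
  have h2 := key o' ho' (by linarith [hb y hy])
  have h3 := conformalDist_triangle huc o y o'
  rw [conformalDist_comm huc y o'] at h3
  linarith

/-- In a complete metric of nonnegative curvature, the conformal factor decays at most like
`|z|⁻¹` along a sequence of circles. -/
theorem exists_sphere_lower_bound {u : ℂ → ℝ} (hu : ContDiff ℝ 2 u)
    (hlap : ∀ z, complexLap u z ≤ 0) (hcomp : IsConformallyComplete u) {ε : ℝ} (hε : 0 < ε)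
    (N : ℕ) : ∃ k ≥ N, ∀ z ∈ sphere (0 : ℂ) (2 ^ k), -(1 + ε) * Real.log (2 ^ k) ≤ u z := by
  have huc := hu.continuous
  obtain ⟨C, hC, H⟩ := exists_conformalDist_le_add_exp hu hlap hcomp
  by_contra! hcon
  choose! o ho hou using hcon
  set ρ : ℝ := Real.exp (-(ε * Real.log 2)) with hρ
  have hlog2 : 0 < Real.log 2 := Real.log_pos one_lt_two
  have hρ0 : 0 < ρ := Real.exp_pos _
  have hρ1 : ρ < 1 := Real.exp_lt_one_iff.2 (by have := mul_pos hε hlog2; linarith)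
  have hexp : ∀ k ≥ N, Real.exp (u (o k)) ≤ ρ ^ k / 2 ^ k := by
    intro k hk
    refine (Real.exp_le_exp.2 (hou k hk).le).trans_eq ?_
    rw [hρ, ← Real.exp_nat_mul, eq_div_iff (by positivity)]
    nth_rewrite 2 [← Real.exp_log (show (0 : ℝ) < 2 ^ k by positivity)]
    rw [← Real.exp_add, Real.log_pow]
    ring_nf
  have hnorm : ∀ k ≥ N, ‖o k‖ = 2 ^ k := fun k hk => by simpa using ho k hk
  have hstep : ∀ k ≥ N, conformalDist u (o k) (o (k + 1)) ≤ 4 * C * ρ ^ k := by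
    intro k hk
    have h1 := H (2 ^ (k + 1)) (o k) (o (k + 1)) (by positivity)
      (by rw [hnorm k hk]; gcongr <;> simp) (hnorm _ (by lia)).le
    have h2 : Real.exp (u (o (k + 1))) ≤ ρ ^ k / 2 ^ k := by
      refine (hexp (k + 1) (by lia)).trans ?_
      gcongr ?_ / ?_
      · exact pow_le_pow_of_le_one hρ0.le hρ1.le (by simp)
      · gcongr <;> simp
    calc conformalDist u (o k) (o (k + 1)) ≤ _ := h1
      _ ≤ C * 2 ^ (k + 1) * (ρ ^ k / 2 ^ k + ρ ^ k / 2 ^ k) := by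
        gcongr
        exact hexp k hk
      _ = 4 * C * ρ ^ k := by
        rw [pow_succ]; field_simp; ring
  have hsum : ∀ n ≥ N, conformalDist u (o N) (o n) ≤ 4 * C * ∑ k ∈ Finset.range n, ρ ^ k := by
    intro n hn
    induction n, hn using Nat.le_induction with
    | base =>
      rw [conformalDist_self huc]
      positivity
    | succ n hn ih =>
      rw [Finset.sum_range_succ, mul_add]
      exact (conformalDist_triangle huc _ (o n) _).trans (add_le_add ih (hstep n hn))
  have hbd : ∀ n ≥ N, conformalDist u (o N) (o n) < 4 * C * (1 - ρ)⁻¹ + 1 := by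
    intro n hn
    have h1 : ∑ k ∈ Finset.range n, ρ ^ k ≤ (1 - ρ)⁻¹ := by
      rw [← tsum_geometric_of_lt_one hρ0.le hρ1]
      exact (summable_geometric_of_lt_one hρ0.le hρ1).sum_le_tsum _ fun _ _ => by positivity
    have h2 : 4 * C * ∑ k ∈ Finset.range n, ρ ^ k ≤ 4 * C * (1 - ρ)⁻¹ := by gcongr
    linarith [hsum n hn]
  obtain ⟨R, hR⟩ := (hcomp.isBounded huc (o N) (4 * C * (1 - ρ)⁻¹ + 1)).exists_norm_le
  obtain ⟨n, hn⟩ := pow_unbounded_of_one_lt R (one_lt_two (α := ℝ))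
  have h1 := hR (o (max n N)) (hbd _ (le_max_right _ _))
  rw [hnorm _ (le_max_right _ _)] at h1
  have h2 : (2 : ℝ) ^ n ≤ 2 ^ max n N := by
    gcongr
    · norm_num
    · exact le_max_left _ _
  linarith

theorem integrableOn_ball_complexLap {u : ℂ → ℝ} (hu : ContDiff ℝ 2 u)
    (c : ℂ) (r : ℝ) :
    IntegrableOn (fun z => -complexLap u z) (ball c r) :=
  (hu.continuous_complexLap.neg.continuousOn.integrableOn_compact
    (isCompact_closedBall c r)).mono_set ball_subset_closedBall

theorem curvatureMass_nonneg {u : ℂ → ℝ} (hu : ContDiff ℝ 2 u)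
    (hlap : ∀ z, complexLap u z ≤ 0)
    (c : ℂ) {r : ℝ} (hr : 0 ≤ r) : 0 ≤ curvatureMass u c r := by
  rw [curvatureMass_eq_setIntegral hu c hr]
  exact mul_nonneg (by positivity)
    (setIntegral_nonneg measurableSet_ball fun z _ => neg_nonneg.2 (hlap z))

theorem curvatureMass_mono {u : ℂ → ℝ} (hu : ContDiff ℝ 2 u)
    (hlap : ∀ z, complexLap u z ≤ 0)
    (c : ℂ) {r s : ℝ} (hr : 0 ≤ r) (hrs : r ≤ s) :
    curvatureMass u c r ≤ curvatureMass u c s := by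
  rw [curvatureMass_eq_setIntegral hu c hr, curvatureMass_eq_setIntegral hu c (hr.trans hrs)]
  refine mul_le_mul_of_nonneg_left ?_ (by positivity)
  exact setIntegral_mono_set (integrableOn_ball_complexLap hu c s)
    (ae_of_all _ fun z => neg_nonneg.2 (hlap z)) (ball_subset_ball hrs).eventuallyLE

theorem curvatureMass_le_sub {u : ℂ → ℝ} (hu : ContDiff ℝ 2 u)
    (hlap : ∀ z, complexLap u z ≤ 0)
    {c c' : ℂ} {s r₁ r₂ : ℝ} (hs : 0 ≤ s) (hr₁ : 0 ≤ r₁) (hr : r₁ ≤ r₂)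
    (hsub : ball c s ⊆ ball c' r₂ \ ball c' r₁) :
    curvatureMass u c s ≤ curvatureMass u c' r₂ - curvatureMass u c' r₁ := by
  rw [curvatureMass_eq_setIntegral hu c hs, curvatureMass_eq_setIntegral hu c' hr₁,
    curvatureMass_eq_setIntegral hu c' (hr₁.trans hr), ← mul_sub]
  have hi := integrableOn_ball_complexLap hu c' r₂
  rw [← setIntegral_sdiff measurableSet_ball hi (ball_subset_ball hr)]
  refine mul_le_mul_of_nonneg_left ?_ (by positivity)
  exact setIntegral_mono_set (hi.mono_set Set.sdiff_subset)
    (ae_of_all _ fun z => neg_nonneg.2 (hlap z)) hsub.eventuallyLE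

theorem curvatureMass_pos {u : ℂ → ℝ} (hu : ContDiff ℝ 2 u)
    (hlap : ∀ z, complexLap u z ≤ 0)
    {z : ℂ} (hz : complexLap u z ≠ 0) {c : ℂ} {r : ℝ} (hr : dist z c < r) :
    0 < curvatureMass u c r := by
  have hr0 : 0 ≤ r := dist_nonneg.trans hr.le
  refine lt_of_le_of_ne (curvatureMass_nonneg hu hlap c hr0) fun h0 => hz ?_
  rw [curvatureMass_eq_setIntegral hu c hr0, zero_eq_mul] at h0
  have h1 := (setIntegral_eq_zero_iff_of_nonneg_ae (ae_of_all _ fun z => neg_nonneg.2 (hlap z))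
    (integrableOn_ball_complexLap hu c r)).1 (h0.resolve_left (by positivity))
  have h2 := Measure.eqOn_open_of_ae_eq h1 isOpen_ball
    hu.continuous_complexLap.neg.continuousOn continuousOn_const (mem_ball.2 hr)
  simpa using h2

theorem curvatureMass_le_of_neg_complexLap_le {u : ℂ → ℝ} (hu : ContDiff ℝ 2 u)
    {c : ℂ} {r B : ℝ} (hr : 0 ≤ r)
    (hB : ∀ z ∈ ball c r, -complexLap u z ≤ B) : curvatureMass u c r ≤ B * r ^ 2 / 2 := by
  rw [curvatureMass_eq_setIntegral hu c hr]
  have h1 : ∫ z in ball c r, -complexLap u z ≤ ∫ _ in ball c r, B :=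
    setIntegral_mono_on (integrableOn_ball_complexLap hu c r)
      (integrableOn_const (by simp [Complex.volume_ball, ENNReal.mul_eq_top])) measurableSet_ball hB
  rw [setIntegral_const, volume_ball_toReal c hr, smul_eq_mul] at h1
  calc (2 * Real.pi)⁻¹ * ∫ z in ball c r, -complexLap u z
      ≤ (2 * Real.pi)⁻¹ * (Real.pi * r ^ 2 * B) := by gcongr
    _ = B * r ^ 2 / 2 := by field_simp

theorem circleAverage_add_mul_log_mono {u : ℂ → ℝ} (hu : ContDiff ℝ 2 u)
    {c : ℂ} {r₁ r₂ a : ℝ} (hr₁ : 0 < r₁) (hr : r₁ ≤ r₂)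
    (ha : ∀ t ∈ Set.Icc r₁ r₂, curvatureMass u c t ≤ a) :
    Real.circleAverage u c r₁ + a * Real.log r₁ ≤
      Real.circleAverage u c r₂ + a * Real.log r₂ := by
  have hd : ∀ t ∈ Set.Icc r₁ r₂, HasDerivAt
      (fun t => Real.circleAverage u c t + a * Real.log t) (-(curvatureMass u c t / t) + a * t⁻¹)
      t := fun t ht =>
    (hasDerivAt_circleAverage hu c (hr₁.trans_le ht.1)).add
      ((Real.hasDerivAt_log (hr₁.trans_le ht.1).ne').const_mul a)
  refine monotoneOn_of_deriv_nonneg (convex_Icc r₁ r₂)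
    (fun t ht => (hd t ht).continuousAt.continuousWithinAt)
    (fun t ht => (hd t (interior_subset ht)).differentiableAt.differentiableWithinAt)
    (fun t ht => ?_) (Set.left_mem_Icc.2 hr) (Set.right_mem_Icc.2 hr) hr
  rw [(hd t (interior_subset ht)).deriv]
  have ht0 := hr₁.trans_le (interior_subset ht).1
  have := ha t (interior_subset ht)
  rw [← div_eq_mul_inv, neg_add_eq_sub, ← sub_div]
  exact div_nonneg (by linarith) ht0.le

theorem circleAverage_add_mul_log_anti {u : ℂ → ℝ} (hu : ContDiff ℝ 2 u)
    {c : ℂ} {r₁ r₂ a : ℝ} (hr₁ : 0 < r₁) (hr : r₁ ≤ r₂)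
    (ha : ∀ t ∈ Set.Icc r₁ r₂, a ≤ curvatureMass u c t) :
    Real.circleAverage u c r₂ + a * Real.log r₂ ≤
      Real.circleAverage u c r₁ + a * Real.log r₁ := by
  have hd : ∀ t ∈ Set.Icc r₁ r₂, HasDerivAt
      (fun t => Real.circleAverage u c t + a * Real.log t) (-(curvatureMass u c t / t) + a * t⁻¹)
      t := fun t ht =>
    (hasDerivAt_circleAverage hu c (hr₁.trans_le ht.1)).add
      ((Real.hasDerivAt_log (hr₁.trans_le ht.1).ne').const_mul a)
  refine antitoneOn_of_deriv_nonpos (convex_Icc r₁ r₂)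
    (fun t ht => (hd t ht).continuousAt.continuousWithinAt)
    (fun t ht => (hd t (interior_subset ht)).differentiableAt.differentiableWithinAt)
    (fun t ht => ?_) (Set.left_mem_Icc.2 hr) (Set.right_mem_Icc.2 hr) hr
  rw [(hd t (interior_subset ht)).deriv]
  have ht0 := hr₁.trans_le (interior_subset ht).1
  have := ha t (interior_subset ht)
  rw [← div_eq_mul_inv, neg_add_eq_sub, ← sub_div]
  exact div_nonpos_of_nonpos_of_nonneg (by linarith) ht0.le

theorem le_circleAverage_add_mul_sq {u : ℂ → ℝ} (hu : ContDiff ℝ 2 u)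
    {c : ℂ} {r B : ℝ} (hr : 0 ≤ r)
    (hB : ∀ t ∈ Set.Icc 0 r, curvatureMass u c t ≤ B * t ^ 2) :
    u c ≤ Real.circleAverage u c r + B * r ^ 2 / 2 := by
  have hd : ∀ t ∈ interior (Set.Icc 0 r), HasDerivAt
      (fun t => Real.circleAverage u c t + B * t ^ 2 / 2) (-(curvatureMass u c t / t) + B * t)
      t := fun t ht => by
    rw [interior_Icc] at ht
    refine ((hasDerivAt_circleAverage hu c ht.1).add
      (((hasDerivAt_pow 2 t).const_mul B).div_const 2)).congr_deriv ?_
    ring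
  have hA := Real.Continuous.circleAverage (c := c) hu.continuous
  have h := monotoneOn_of_deriv_nonneg (convex_Icc 0 r)
    (f := fun t => Real.circleAverage u c t + B * t ^ 2 / 2) (by fun_prop)
    (fun t ht => (hd t ht).differentiableAt.differentiableWithinAt)
    (fun t ht => ?_) (Set.left_mem_Icc.2 hr) (Set.right_mem_Icc.2 hr) hr
  · simpa using h
  rw [(hd t ht).deriv]
  have h1 := hB t (interior_subset ht)
  rw [interior_Icc] at ht
  rw [neg_add_eq_sub, sub_nonneg, div_le_iff₀ ht.1]
  linarith

theorem circleAverage_anti {u : ℂ → ℝ} (hu : ContDiff ℝ 2 u)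
    (hlap : ∀ z, complexLap u z ≤ 0)
    {c : ℂ} {r₁ r₂ : ℝ} (hr₁ : 0 ≤ r₁) (hr : r₁ ≤ r₂) :
    Real.circleAverage u c r₂ ≤ Real.circleAverage u c r₁ := by
  rcases hr₁.eq_or_lt with rfl | h0
  · rw [Real.circleAverage_zero]
    exact circleAverage_le_of_squareSuperharmonicAt hu.continuous
      (fun z => hu.contDiffAt.squareSuperharmonicAt (hlap z)) c hr
  · simpa using circleAverage_add_mul_log_anti hu (a := 0) h0 hr fun t ht =>
      curvatureMass_nonneg hu hlap c (h0.le.trans ht.1)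

theorem mul_circleAverage_sub_le {u : ℂ → ℝ} (hu : ContDiff ℝ 2 u)
    (hlap : ∀ z, complexLap u z ≤ 0)
    {c : ℂ} {r b : ℝ} (hr : 0 ≤ r) :
    Real.pi * r ^ 2 * (Real.circleAverage u c r - b) ≤ ∫ z in ball c r, (u z - b) := by
  have hcb : Continuous fun z => -(u z - b) := by
    have := hu.continuous
    fun_prop
  have h := setIntegral_ball_le_of_circleAverage_le hcb (c := c) hr
    (a := b - Real.circleAverage u c r) fun s hs => by
      have h1 : (fun z => -(u z - b)) = fun z => b - u z := by ext; ring
      rw [h1, Real.circleAverage_fun_sub continuousOn_const.circleIntegrable'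
        hu.continuous.continuousOn.circleIntegrable', Real.circleAverage_const]
      linarith [circleAverage_anti hu hlap (c := c) hs.1 hs.2]
  rw [integral_neg] at h
  linarith

theorem curvatureMass_le_one {u : ℂ → ℝ} (hu : ContDiff ℝ 2 u)
    (hlap : ∀ z, complexLap u z ≤ 0) (hcomp : IsConformallyComplete u) {r : ℝ} (hr : 0 < r) :
    curvatureMass u 0 r ≤ 1 := by
  by_contra! hcon
  set ε := (curvatureMass u 0 r - 1) / 2 with hε
  have hε0 : 0 < ε := by rw [hε]; linarith
  set B := Real.circleAverage u 0 r + curvatureMass u 0 r * Real.log r with hB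
  have hlog2 : 0 < Real.log 2 := Real.log_pos one_lt_two
  obtain ⟨N₁, hN₁⟩ := exists_nat_gt (B / (ε * Real.log 2))
  obtain ⟨N₂, hN₂⟩ := pow_unbounded_of_one_lt r (one_lt_two (α := ℝ))
  obtain ⟨k, hk, hku⟩ := exists_sphere_lower_bound hu hlap hcomp hε0 (max N₁ N₂)
  have hk1 : (N₁ : ℝ) ≤ k := Nat.cast_le.2 ((le_max_left _ _).trans hk)
  have hk2 : r ≤ 2 ^ k := hN₂.le.trans
    (pow_le_pow_right₀ one_le_two ((le_max_right _ _).trans hk))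
  have h1 := circleAverage_add_mul_log_anti hu (c := 0) hr hk2 fun t ht =>
    curvatureMass_mono hu hlap 0 hr.le ht.1
  have h2 : -(1 + ε) * Real.log (2 ^ k) ≤ Real.circleAverage u 0 (2 ^ k) := by
    have := Real.circleAverage_mono (c := (0 : ℂ)) (R := 2 ^ k)
      (f₁ := fun _ => -(1 + ε) * Real.log (2 ^ k)) (f₂ := u)
      continuousOn_const.circleIntegrable' hu.continuous.continuousOn.circleIntegrable'
      (fun z hz => hku z (by simpa using hz))
    rwa [Real.circleAverage_const] at this
  rw [div_lt_iff₀ (by positivity)] at hN₁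
  rw [Real.log_pow] at h1 h2
  have h3 : (N₁ : ℝ) * (ε * Real.log 2) ≤ k * (ε * Real.log 2) := by gcongr
  have h4 : curvatureMass u 0 r = 1 + 2 * ε := by rw [hε]; ring
  rw [← hB, h4] at h1
  linarith

theorem exists_tendsto_curvatureMass {u : ℂ → ℝ} (hu : ContDiff ℝ 2 u)
    (hlap : ∀ z, complexLap u z ≤ 0) (hcomp : IsConformallyComplete u)
    (hflat : ∃ z, complexLap u z ≠ 0) :
    ∃ m : ℝ, 0 < m ∧ m ≤ 1 ∧ (∀ r, 0 ≤ r → curvatureMass u 0 r ≤ m) ∧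
      Tendsto (curvatureMass u 0) atTop (nhds m) := by
  set f : ℝ → ℝ := fun r => curvatureMass u 0 (max r 0) with hf
  have hmono : Monotone f := fun a b hab =>
    curvatureMass_mono hu hlap 0 (le_max_right _ _) (max_le_max_right 0 hab)
  have hle : ∀ r, f r ≤ 1 := fun r =>
    (curvatureMass_mono hu hlap 0 (le_max_right _ _)
      (show max r 0 ≤ |r| + 1 from max_le (by linarith [le_abs_self r]) (by positivity))).trans
      (curvatureMass_le_one hu hlap hcomp (by positivity))
  have hbdd : BddAbove (Set.range f) := ⟨1, by rintro _ ⟨r, rfl⟩; exact hle r⟩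
  have hfm : ∀ r, 0 ≤ r → curvatureMass u 0 r ≤ ⨆ r, f r := fun r hr => by
    have h := le_ciSup hbdd r
    simpa only [hf, max_eq_left hr] using h
  obtain ⟨z, hz⟩ := hflat
  refine ⟨⨆ r, f r, ?_, ciSup_le hle, hfm, ?_⟩
  · exact (curvatureMass_pos hu hlap hz (lt_add_one (dist z 0))).trans_le (hfm _ (by positivity))
  · refine (tendsto_atTop_ciSup hmono hbdd).congr' ?_
    filter_upwards [eventually_ge_atTop 0] with r hr
    simp only [hf, max_eq_left hr]

theorem eventually_abs_circleAverage_add_mul_log_le {u : ℂ → ℝ} (hu : ContDiff ℝ 2 u)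
    (hlap : ∀ z, complexLap u z ≤ 0) {m : ℝ} (hm : ∀ r, 0 ≤ r → curvatureMass u 0 r ≤ m)
    (hlim : Tendsto (curvatureMass u 0) atTop (nhds m)) {ε : ℝ} (hε : 0 < ε) :
    ∀ᶠ r in atTop, |Real.circleAverage u 0 r + m * Real.log r| ≤ ε * Real.log r := by
  obtain ⟨r₁, hr₁, hr₁1⟩ := ((hlim.eventually_const_lt (show m - ε / 2 < m by linarith)).and
    (eventually_ge_atTop 1)).exists
  have hr₁0 : 0 < r₁ := by linarith
  have e1 := (Real.tendsto_log_atTop.const_mul_atTop hε).eventually_ge_atTop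
    (-(Real.circleAverage u 0 1))
  have e2 := (Real.tendsto_log_atTop.const_mul_atTop (half_pos hε)).eventually_ge_atTop
    (Real.circleAverage u 0 r₁ + (m - ε / 2) * Real.log r₁)
  filter_upwards [e1, e2, eventually_ge_atTop r₁] with r h1 h2 hr
  have h3 := circleAverage_add_mul_log_mono hu (c := 0) one_pos (hr₁1.trans hr) fun t ht =>
    hm t (zero_le_one.trans ht.1)
  have h4 := circleAverage_add_mul_log_anti hu (c := 0) hr₁0 hr fun t ht =>
    hr₁.le.trans (curvatureMass_mono hu hlap 0 hr₁0.le ht.1)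
  rw [Real.log_one] at h3
  rw [abs_le]
  constructor <;> linarith

/-- A consequence of the maximum principle in annuli: the minimum of `u` over circles decays
slowly. -/
theorem exists_le_add_four {u : ℂ → ℝ} (hu : ContDiff ℝ 2 u)
    (hlap : ∀ z, complexLap u z ≤ 0) (hcomp : IsConformallyComplete u) {R : ℝ} (hR : 0 < R) :
    ∃ b, ∃ y ∈ sphere (0 : ℂ) R, (∀ z ∈ closedBall (0 : ℂ) (5 * R), b ≤ u z) ∧ u y ≤ b + 4 := by
  have huc := hu.continuous
  have hs : ∀ z, SquareSuperharmonicAt u z := fun z =>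
    hu.contDiffAt.squareSuperharmonicAt (hlap z)
  obtain ⟨y, hy, hymin⟩ := (isCompact_sphere (0 : ℂ) R).exists_isMinOn
    (NormedSpace.sphere_nonempty.2 hR.le) huc.continuousOn
  obtain ⟨x, hx, hxmin⟩ := (isCompact_sphere (0 : ℂ) (5 * R)).exists_isMinOn
    (NormedSpace.sphere_nonempty.2 (by positivity)) huc.continuousOn
  refine ⟨u x, y, hy, le_of_squareSuperharmonicAt_punctured huc (fun z _ => hs z) (by positivity)
    fun z hz => hxmin hz, ?_⟩
  rw [mem_sphere, dist_zero_right] at hx hy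
  have hlog2 : 0 < Real.log 2 := Real.log_pos one_lt_two
  set a := u y + 2 * Real.log R with ha
  obtain ⟨N₁, hN₁⟩ := exists_nat_gt (a / (Real.log 2 / 2))
  obtain ⟨N₂, hN₂⟩ := pow_unbounded_of_one_lt (5 * R) (one_lt_two (α := ℝ))
  obtain ⟨k, hk, hku⟩ := exists_sphere_lower_bound hu hlap hcomp
    (show (0 : ℝ) < 1 / 2 by norm_num) (max N₁ N₂)
  have hk1 : (N₁ : ℝ) ≤ k := Nat.cast_le.2 ((le_max_left _ _).trans hk)
  have hk2 : 5 * R ≤ 2 ^ k := hN₂.le.trans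
    (pow_le_pow_right₀ one_le_two ((le_max_right _ _).trans hk))
  rw [div_lt_iff₀ (by positivity)] at hN₁
  have h3 : (N₁ : ℝ) * (Real.log 2 / 2) ≤ k * (Real.log 2 / 2) := by gcongr
  set K : Set ℂ := closedBall 0 (2 ^ k) ∩ {z | R ≤ ‖z‖} with hK
  have hKc : IsCompact K :=
    (isCompact_closedBall _ _).inter_right (isClosed_le continuous_const continuous_norm)
  have hne : ∀ z ∈ K, z ≠ 0 := by
    rintro z hz rfl
    have : R ≤ ‖(0 : ℂ)‖ := hz.2
    rw [norm_zero] at this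
    linarith
  have h := le_of_squareSuperharmonicAt (q := fun z => u z + 2 * Real.log ‖z - 0‖) (m := a) hKc
    (fun z hz => ContinuousAt.continuousWithinAt (huc.continuousAt.add
      (((by fun_prop : ContinuousAt (fun z : ℂ => ‖z - 0‖) z).log
        (by simpa using hne z hz)).const_mul 2)))
    (fun z hz => (hs z).add
      (squareSuperharmonicAt_const_mul_log 2 (hne z (interior_subset hz))))
    (fun z hz hzi => by
      have hz1 : ‖z‖ ≤ 2 ^ k := by simpa using hz.1
      have hz2 : R ≤ ‖z‖ := hz.2
      rcases hz2.eq_or_lt with he | hlt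
      · rw [sub_zero, ← he, ha]
        have := hymin (show z ∈ sphere (0 : ℂ) R by simpa using he.symm)
        simp only [Set.mem_ofPred_eq] at this
        linarith
      rcases hz1.eq_or_lt with he | hlt'
      · have := hku z (by simpa using he)
        rw [sub_zero, he]
        rw [Real.log_pow] at this ⊢
        linarith
      · have hz' : z ∈ interior K := mem_interior.2 ⟨ball 0 (2 ^ k) ∩ {z | R < ‖z‖},
          fun w hw => ⟨ball_subset_closedBall hw.1, show R ≤ ‖w‖ from le_of_lt hw.2⟩,
          isOpen_ball.inter (isOpen_lt continuous_const continuous_norm),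
          by simpa using hlt', hlt⟩
        exact absurd hz' hzi) x ⟨by simpa [hx] using hk2, by
        change R ≤ ‖x‖
        rw [hx]; linarith⟩
  rw [sub_zero, hx, Real.log_mul (by norm_num) hR.ne', ha] at h
  have h5 : Real.log 5 ≤ 2 := by
    rw [Real.log_le_iff_le_exp (by norm_num)]
    have := Real.exp_one_gt_d9
    rw [show (2 : ℝ) = 1 + 1 by norm_num, Real.exp_add]
    nlinarith
  linarith

theorem exists_circleAverage_le {u : ℂ → ℝ} (hu : ContDiff ℝ 2 u)
    (hlap : ∀ z, complexLap u z ≤ 0) (hcomp : IsConformallyComplete u) {R : ℝ} (hR : 0 < R) :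
    ∃ b, (∀ z ∈ closedBall (0 : ℂ) (5 * R), b ≤ u z) ∧ ∀ (c : ℂ) (s : ℝ), 0 < s →
      ‖c‖ + s ≤ 3 * R → s ^ 2 * (Real.circleAverage u c s - b) ≤ 64 * R ^ 2 := by
  obtain ⟨b, y, hy, hb, hyb⟩ := exists_le_add_four hu hlap hcomp hR
  rw [mem_sphere, dist_zero_right] at hy
  refine ⟨b, hb, fun c s hs hcs => ?_⟩
  have hs' : ∀ z, SquareSuperharmonicAt u z := fun z =>
    hu.contDiffAt.squareSuperharmonicAt (hlap z)
  have h1 := setIntegral_ball_sub_le hu.continuous (q := u) (c := y) (y := c) (R := 4 * R) (s := s)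
    (b := b) (t := 4) (by positivity)
    (ball_subset_ball' (by
      rw [dist_eq_norm]
      have := norm_sub_le c y
      linarith))
    (fun z hz => hb z (by
      rw [mem_ball, dist_eq_norm] at hz
      rw [mem_closedBall, dist_zero_right]
      have := norm_add_le (z - y) y
      rw [sub_add_cancel] at this
      linarith))
    (fun r hr => (circleAverage_le_of_squareSuperharmonicAt hu.continuous hs' y hr.1).trans hyb)
  have h2 := mul_circleAverage_sub_le hu hlap (c := c) (b := b) hs.le
  refine le_of_mul_le_mul_left ?_ Real.pi_pos
  linarith

theorem circleAverage_sub_le {u : ℂ → ℝ} (hu : ContDiff ℝ 2 u)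
    (hlap : ∀ z, complexLap u z ≤ 0) (hcomp : IsConformallyComplete u) {z : ℂ} (hz : z ≠ 0) :
    Real.circleAverage u 0 ‖z‖ - 8 ≤ u z := by
  have hz0 : 0 < ‖z‖ := norm_pos_iff.2 hz
  obtain ⟨b, hb, H⟩ := exists_circleAverage_le hu hlap hcomp (R := ‖z‖ / 3) (by positivity)
  have h1 := H 0 ‖z‖ hz0 (by simp; linarith)
  have h2 := hb z (by simp; linarith)
  have h3 : ‖z‖ ^ 2 * (Real.circleAverage u 0 ‖z‖ - b) ≤ ‖z‖ ^ 2 * 8 := by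
    nlinarith [sq_nonneg ‖z‖]
  have := le_of_mul_le_mul_left h3 (by positivity)
  linarith

theorem circleAverage_le_circleAverage_zero_add {u : ℂ → ℝ} (hu : ContDiff ℝ 2 u)
    (hlap : ∀ z, complexLap u z ≤ 0) (hcomp : IsConformallyComplete u) {R : ℝ} (hR : 0 < R) {z : ℂ}
    (hz : ‖z‖ ≤ 2 * R) :
    Real.circleAverage u z (R / 4) ≤ Real.circleAverage u 0 R + 1024 := by
  obtain ⟨b, hb, H⟩ := exists_circleAverage_le hu hlap hcomp hR
  have h1 := H z (R / 4) (by positivity) (by linarith)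
  have h2 : b ≤ Real.circleAverage u 0 R := by
    have := Real.circleAverage_mono (c := (0 : ℂ)) (R := R)
      (f₁ := fun _ => b) (f₂ := u)
      continuousOn_const.circleIntegrable' hu.continuous.continuousOn.circleIntegrable'
      (fun z hz => hb z (by
        rw [abs_of_pos hR, mem_sphere] at hz
        rw [mem_closedBall, hz]; linarith))
    rwa [Real.circleAverage_const] at this
  have h3 : R ^ 2 * (Real.circleAverage u z (R / 4) - b) ≤ R ^ 2 * 1024 := by
    nlinarith
  have := le_of_mul_le_mul_left h3 (by positivity)
  linarith

/-- A point-picking argument: every value of `u` is dominated by the value at a point around which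
`exp u` is almost constant on a comparatively large ball. -/
theorem exists_exp_le_two_mul_exp {u : ℂ → ℝ} (huc : Continuous u) (z₀ : ℂ) {ρ : ℝ} (hρ : 0 < ρ) :
    ∃ z ∈ closedBall z₀ ρ, ∃ σ : ℝ, 0 < σ ∧ 2 * σ ≤ ρ ∧ u z₀ ≤ u z ∧
      Real.exp (u z₀) * ρ ≤ 2 * σ * Real.exp (u z) ∧
      ∀ w ∈ ball z σ, Real.exp (u w) ≤ 2 * Real.exp (u z) := by
  obtain ⟨z, hz, hmax⟩ := (isCompact_closedBall z₀ ρ).exists_isMaxOn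
    ⟨z₀, mem_closedBall_self hρ.le⟩
    (show ContinuousOn (fun y => Real.exp (u y) * (ρ - dist y z₀)) (closedBall z₀ ρ) by fun_prop)
  have hmax' : ∀ w ∈ closedBall z₀ ρ,
      Real.exp (u w) * (ρ - dist w z₀) ≤ Real.exp (u z) * (ρ - dist z z₀) := fun w hw => hmax hw
  have h0 := hmax' z₀ (mem_closedBall_self hρ.le)
  rw [dist_self, sub_zero] at h0
  have hd : 0 ≤ dist z z₀ := dist_nonneg
  have hσ : 0 < ρ - dist z z₀ :=
    pos_of_mul_pos_right ((by positivity : 0 < Real.exp (u z₀) * ρ).trans_le h0) (Real.exp_pos _).le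
  refine ⟨z, hz, (ρ - dist z z₀) / 2, by positivity, by linarith, ?_, by linarith, fun w hw => ?_⟩
  · rw [← Real.exp_le_exp]
    refine le_of_mul_le_mul_right (h0.trans ?_) hρ
    gcongr
    linarith
  · have hw' : dist w z₀ ≤ (ρ + dist z z₀) / 2 := by
      have := dist_triangle w z z₀
      rw [mem_ball] at hw
      linarith
    have h1 := hmax' w (by rw [mem_closedBall]; linarith)
    have h2 : Real.exp (u w) * ((ρ - dist z z₀) / 2) ≤ Real.exp (u w) * (ρ - dist w z₀) := by
      gcongr
      linarith
    refine le_of_mul_le_mul_right (?_ : _ ≤ _ * ((ρ - dist z z₀) / 2)) (by positivity)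
    linarith

theorem exists_le_circleAverage_add {u : ℂ → ℝ} (hu : ContDiff ℝ 2 u)
    (hlap : ∀ z, complexLap u z ≤ 0) (hcomp : IsConformallyComplete u) {C : ℝ} (hC : 0 ≤ C)
    (hbdd : ∀ z, -complexLap u z ≤ C * Real.exp (2 * u z)) :
    ∃ K, ∀ R, 1 ≤ R → curvatureMass u 0 (2 * R) - curvatureMass u 0 (R / 2) ≤ 1 / 2 →
      ∀ z, ‖z‖ = R → u z ≤ Real.circleAverage u 0 R + K +
        3 * (curvatureMass u 0 (2 * R) - curvatureMass u 0 (R / 2)) * Real.log R := by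
  set a := Real.circleAverage u 0 1 with ha
  refine ⟨2 * |a| + 2048 + 2 * C + Real.log 8, fun R hR hη z₀ hz₀ => ?_⟩
  have hR0 : 0 < R := by linarith
  have hlogR : 0 ≤ Real.log R := Real.log_nonneg hR
  have hlog8 : 0 ≤ Real.log 8 := Real.log_nonneg (by norm_num)
  set η := curvatureMass u 0 (2 * R) - curvatureMass u 0 (R / 2) with hηdef
  set A := Real.circleAverage u 0 R with hA
  have hη0 : 0 ≤ η := sub_nonneg.2 (curvatureMass_mono hu hlap 0 (by positivity) (by linarith))
  have hAa : A ≤ a := circleAverage_anti hu hlap zero_le_one hR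
  have haA : a ≤ A + Real.log R := by
    have := circleAverage_add_mul_log_mono hu (c := 0) (a := 1) one_pos hR fun t ht =>
      curvatureMass_le_one hu hlap hcomp (one_pos.trans_le ht.1)
    rw [Real.log_one] at this
    linarith
  obtain ⟨z, hz, σ, hσ, hσR, hzz, h1, h2⟩ :=
    exists_exp_le_two_mul_exp hu.continuous z₀ (ρ := R / 4) (by positivity)
  have hzn : ‖z - z₀‖ ≤ R / 4 := by simpa [dist_eq_norm] using hz
  have hmass : ∀ s, 0 ≤ s → s ≤ R / 4 → curvatureMass u z s ≤ η := fun s hs hs' => by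
    refine curvatureMass_le_sub hu hlap hs (by positivity) (by linarith) fun w hw => ?_
    rw [mem_ball, dist_eq_norm] at hw
    have e1 : w = z₀ + ((w - z) + (z - z₀)) := by ring
    have e2 := norm_add_le (w - z) (z - z₀)
    refine ⟨?_, fun h => ?_⟩
    · rw [mem_ball, dist_zero_right, e1]
      have := norm_add_le z₀ ((w - z) + (z - z₀))
      linarith
    · rw [mem_ball, dist_zero_right, e1] at h
      have := norm_sub_le (z₀ + ((w - z) + (z - z₀))) ((w - z) + (z - z₀))
      rw [add_sub_cancel_right] at this
      linarith
  have havg : Real.circleAverage u z (R / 4) ≤ A + 1024 :=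
    circleAverage_le_circleAverage_zero_add hu hlap hcomp hR0 (by
      have := norm_add_le z₀ (z - z₀)
      rw [add_sub_cancel] at this
      linarith)
  have hηl : 0 ≤ η * Real.log R := mul_nonneg hη0 hlogR
  have habs := neg_abs_le a
  have habs' := le_abs_self a
  rcases le_or_gt (Real.exp (u z) * σ) 1 with hle | hgt
  · have h3 : Real.exp (u z₀) ≤ Real.exp (Real.log 8 - Real.log R) := by
      rw [Real.exp_sub, Real.exp_log hR0, Real.exp_log (by norm_num), le_div_iff₀ hR0]
      linarith
    rw [Real.exp_le_exp] at h3
    linarith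
  set δ := Real.exp (-u z) with hδ
  have hδ0 : 0 < δ := Real.exp_pos _
  have hee : Real.exp (u z) * δ = 1 := by rw [hδ, ← Real.exp_add]; simp
  have hδσ : δ < σ := by
    refine lt_of_mul_lt_mul_left (?_ : Real.exp (u z) * δ < _) (Real.exp_pos _).le
    rwa [hee]
  have hlap' : ∀ w ∈ ball z δ, -complexLap u w ≤ 4 * C * Real.exp (u z) ^ 2 := fun w hw => by
    have h3 := h2 w (ball_subset_ball hδσ.le hw)
    calc -complexLap u w ≤ C * Real.exp (2 * u w) := hbdd w
      _ = C * Real.exp (u w) ^ 2 := by rw [← Real.exp_nat_mul]; norm_num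
      _ ≤ C * (2 * Real.exp (u z)) ^ 2 := by gcongr
      _ = _ := by ring
  have h3 := le_circleAverage_add_mul_sq hu (c := z) (B := 2 * C * Real.exp (u z) ^ 2) hδ0.le
    fun t ht => by
      have := curvatureMass_le_of_neg_complexLap_le hu (c := z) ht.1 fun w hw =>
        hlap' w (ball_subset_ball ht.2 hw)
      linarith
  have h4 : 2 * C * Real.exp (u z) ^ 2 * δ ^ 2 / 2 = C := by
    calc _ = C * (Real.exp (u z) * δ) ^ 2 := by ring
      _ = C := by rw [hee]; ring
  have h5 := circleAverage_add_mul_log_mono hu (c := z) (a := η) hδ0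
    (show δ ≤ R / 4 by linarith) fun t ht => hmass t (hδ0.le.trans ht.1) ht.2
  rw [hδ, Real.log_exp, Real.log_div hR0.ne' (by norm_num)] at h5
  rw [h4] at h3
  have hlog4 : 0 ≤ η * Real.log 4 := mul_nonneg hη0 (Real.log_nonneg (by norm_num))
  have h6 : u z * (1 - η) ≤ A + 1024 + C + η * Real.log R := by
    rw [hδ] at h3
    nlinarith
  set Y := |a| + 1024 + C + Real.log R with hY
  set X := A + 1024 + C + η * Real.log R with hX
  have hY0 : 0 ≤ Y := by positivity
  have hXY : X ≤ Y := by nlinarith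
  have h7 : u z * (1 - η) ≤ (X + 2 * η * Y) * (1 - η) := by
    have e1 := mul_le_mul_of_nonneg_left hXY hη0
    have e2 := mul_le_mul_of_nonneg_left hη (mul_nonneg hη0 hY0)
    linarith
  have h8 := le_of_mul_le_mul_right h7 (by linarith)
  have h9 : η * (|a| + 1024 + C) ≤ 1 / 2 * (|a| + 1024 + C) := by gcongr
  rw [hX, hY] at h8
  linarith

theorem eventually_abs_add_mul_log_le {u : ℂ → ℝ} (hu : ContDiff ℝ 2 u)
    (hlap : ∀ z, complexLap u z ≤ 0) (hcomp : IsConformallyComplete u) {C : ℝ} (hC : 0 ≤ C)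
    (hbdd : ∀ z, -complexLap u z ≤ C * Real.exp (2 * u z)) {m : ℝ}
    (hm : ∀ r, 0 ≤ r → curvatureMass u 0 r ≤ m)
    (hlim : Tendsto (curvatureMass u 0) atTop (nhds m)) {ε : ℝ} (hε : 0 < ε) :
    ∀ᶠ R in atTop, ∀ z, ‖z‖ = R → |u z + m * Real.log R| ≤ ε * Real.log R := by
  obtain ⟨K, hK⟩ := exists_le_circleAverage_add hu hlap hcomp hC hbdd
  have hη : Tendsto (fun R => curvatureMass u 0 (2 * R) - curvatureMass u 0 (R / 2)) atTop
      (nhds 0) := by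
    rw [← sub_self m]
    exact (hlim.comp (tendsto_id.const_mul_atTop two_pos)).sub
      (hlim.comp (tendsto_id.atTop_div_const two_pos))
  filter_upwards [eventually_ge_atTop 1, hη.eventually_le_const (show 0 < min (1 / 2) (ε / 9) by
      positivity), eventually_abs_circleAverage_add_mul_log_le hu hlap hm hlim
      (show 0 < ε / 3 by positivity),
    (Real.tendsto_log_atTop.const_mul_atTop (show 0 < ε / 3 by positivity)).eventually_ge_atTop
      (max K 8)] with R hR hη' hA hl z hz
  have h1 := hK R hR (hη'.trans (min_le_left _ _)) z hz
  have h2 := circleAverage_sub_le hu hlap hcomp (z := z) (norm_pos_iff.1 (by linarith))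
  have h3 := mul_le_mul_of_nonneg_right (hη'.trans (min_le_right _ _)) (Real.log_nonneg hR)
  have h4 := (le_max_left _ _).trans hl
  have h5 := (le_max_right _ _).trans hl
  have h6 := Real.log_nonneg hR
  rw [hz] at h2
  rw [abs_le] at hA ⊢
  constructor <;> nlinarith

theorem exists_tendsto_div_log_sqrt {u : ℂ → ℝ} (hu : ContDiff ℝ 2 u)
    (hlap : ∀ z, complexLap u z ≤ 0) (hcomp : IsConformallyComplete u) {C : ℝ} (hC : 0 ≤ C)
    (hbdd : ∀ z, -complexLap u z ≤ C * Real.exp (2 * u z)) (hflat : ∃ z, complexLap u z ≠ 0) :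
    ∃ m : ℝ, 0 < m ∧ m ≤ 1 ∧
      Tendsto (fun z => u z / Real.log (Real.sqrt (1 + ‖z‖ ^ 2)))
        (comap norm atTop) (nhds (-m)) := by
  obtain ⟨m, hm0, hm1, hm, hlim⟩ := exists_tendsto_curvatureMass hu hlap hcomp hflat
  refine ⟨m, hm0, hm1, Metric.tendsto_nhds.2 fun ε hε => ?_⟩
  have key : ∀ᶠ R in atTop, ∀ z : ℂ, ‖z‖ = R →
      dist (u z / Real.log (Real.sqrt (1 + ‖z‖ ^ 2))) (-m) < ε := by
    filter_upwards [eventually_abs_add_mul_log_le hu hlap hcomp hC hbdd hm hlim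
      (show 0 < ε / 4 by positivity), eventually_gt_atTop 1,
      (Real.tendsto_log_atTop.const_mul_atTop (show 0 < ε / 4 by positivity)).eventually_ge_atTop
      (Real.log 2)] with R hR hR1 hl z hz
    have hR0 : 0 < R := by linarith
    have h1 := hR z hz
    have hlR : 0 < Real.log R := Real.log_pos hR1
    have hL1 : Real.log R ≤ Real.log (Real.sqrt (1 + ‖z‖ ^ 2)) := by
      apply Real.log_le_log hR0
      rw [hz]
      exact Real.le_sqrt_of_sq_le (by linarith)
    have hL2 : Real.log (Real.sqrt (1 + ‖z‖ ^ 2)) ≤ Real.log 2 + Real.log R := by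
      rw [← Real.log_mul (by norm_num) hR0.ne', hz]
      apply Real.log_le_log (by positivity)
      rw [Real.sqrt_le_left (by positivity)]
      nlinarith
    set L := Real.log (Real.sqrt (1 + ‖z‖ ^ 2)) with hL
    have hL0 : 0 < L := hlR.trans_le hL1
    rw [Real.dist_eq, sub_neg_eq_add, div_add' _ _ _ hL0.ne', abs_div, abs_of_pos hL0,
      div_lt_iff₀ hL0]
    have h2 : |m * (L - Real.log R)| ≤ Real.log 2 := by
      rw [abs_of_nonneg (mul_nonneg hm0.le (by linarith))]
      nlinarith
    have h3 : u z + m * L = (u z + m * Real.log R) + m * (L - Real.log R) := by ring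
    have h4 := abs_add_le (u z + m * Real.log R) (m * (L - Real.log R))
    rw [← h3] at h4
    nlinarith
  filter_upwards [tendsto_comap.eventually key] with z hz
  exact hz z rfl

/-- The standard isometry between the complex plane and the Euclidean plane. -/
noncomputable def complexIsometry : ℂ ≃ₗᵢ[ℝ] EuclideanSpace ℝ (Fin 2) :=
  Complex.orthonormalBasisOneI.repr

theorem complexIsometry_one : complexIsometry 1 = EuclideanSpace.single 0 1 := by
  have := Complex.orthonormalBasisOneI.repr_self 0
  simpa [complexIsometry] using this

theorem complexIsometry_I : complexIsometry Complex.I = EuclideanSpace.single 1 1 := by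
  have := Complex.orthonormalBasisOneI.repr_self 1
  simpa [complexIsometry] using this

theorem fderiv_fderiv_comp_linearIsometryEquiv {E F : Type*} [NormedAddCommGroup E]
    [NormedSpace ℝ E] [NormedAddCommGroup F] [NormedSpace ℝ F] (L : E ≃ₗᵢ[ℝ] F) {u : F → ℝ}
    (hu : ContDiff ℝ 2 u) (z v w : E) :
    fderiv ℝ (fderiv ℝ (fun x => u (L x))) z v w =
      fderiv ℝ (fun y => fderiv ℝ u y (L w)) (L z) (L v) := by
  have h1 : ∀ x w, fderiv ℝ (fun x => u (L x)) x w = fderiv ℝ u (L x) (L w) := fun x w => by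
    have h := ((hu.differentiable (by norm_num)) (L x)).hasFDerivAt.comp x
      L.toContinuousLinearEquiv.hasFDerivAt
    exact DFunLike.congr_fun h.fderiv w
  have hv : ContDiff ℝ 2 fun x => u (L x) := hu.comp L.contDiff
  have h2 := ((hv.fderiv_right (m := 1) (by norm_num)).differentiable (by norm_num)) z
  have h3 := ((hu.fderiv_right (m := 1) (by norm_num)).differentiable (by norm_num)) (L z)
  have e1 := (h2.hasFDerivAt.clm_apply (hasFDerivAt_const w z)).fderiv
  have e2 := ((h3.clm_apply (differentiableAt_const (L w))).hasFDerivAt.comp z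
      L.toContinuousLinearEquiv.hasFDerivAt).fderiv
  have e3 : (fun x => fderiv ℝ (fun x => u (L x)) x w) = fun x => fderiv ℝ u (L x) (L w) :=
    funext fun x => h1 x w
  have e4 := (DFunLike.congr_fun e1 v).symm.trans
    ((congrArg (fun f => fderiv ℝ f z v) e3).trans (DFunLike.congr_fun e2 v))
  simpa using e4

theorem complexLap_comp_complexIsometry {u : EuclideanSpace ℝ (Fin 2) → ℝ}
    (hu : ContDiff ℝ 2 u) (z : ℂ) :
    complexLap (fun x => u (complexIsometry x)) z = lap u (complexIsometry z) := by
  rw [complexLap, lap, fderiv_fderiv_comp_linearIsometryEquiv complexIsometry hu,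
    fderiv_fderiv_comp_linearIsometryEquiv complexIsometry hu, complexIsometry_one,
    complexIsometry_I]

/-- Sharp growth estimate for the conformal factor of a complete, noncompact,
nonnegatively curved, nonflat metric `e^{2u}(dx² + dy²)` on `ℝ²` with bounded
Gaussian curvature `K = (-Δu) e^{-2u}`:
`u = -m log √(1+|z|²) + o(log √(1+|z|²))` as `|z| → ∞` for some `m ∈ (0,1]`. -/
theorem growth_estimate_Gaussian_curvature_equation
    (u : EuclideanSpace ℝ (Fin 2) → ℝ)
    (hu : ContDiff ℝ 2 u)
    (hsuper : ∀ z, lap u z ≤ 0)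
    (hbddcurv : ∃ C : ℝ, ∀ z, |(-lap u z) * Real.exp (-(2 * u z))| ≤ C)
    (hnonflat : ∃ z, lap u z ≠ 0)
    (hcomplete : ∀ γ : ℝ → EuclideanSpace ℝ (Fin 2),
      ContDiffOn ℝ 1 γ (Set.Ico 0 1) →
      Tendsto (fun t => ‖γ t‖) (nhdsWithin 1 (Set.Iio 1)) atTop →
      ∫⁻ t in Set.Ioo (0:ℝ) 1, ENNReal.ofReal (Real.exp (u (γ t)) * ‖deriv γ t‖) = ⊤) :
    ∃ m : ℝ, 0 < m ∧ m ≤ 1 ∧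
      Tendsto (fun z => u z / Real.log (Real.sqrt (1 + ‖z‖ ^ 2)))
        (comap norm atTop) (nhds (-m)) := by
  obtain ⟨C, hC⟩ := hbddcurv
  obtain ⟨z₀, hz₀⟩ := hnonflat
  set v : ℂ → ℝ := fun x => u (complexIsometry x) with hv
  have hvlap : ∀ z, complexLap v z = lap u (complexIsometry z) :=
    complexLap_comp_complexIsometry hu
  have hcomp : IsConformallyComplete v := fun γ hγ hγt => by
    rw [← hcomplete (fun t => complexIsometry (γ t))
      (complexIsometry.contDiff.comp_contDiffOn hγ) (by simpa using hγt)]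
    refine setLIntegral_congr_fun measurableSet_Ioo fun t ht => ?_
    have hd : DifferentiableAt ℝ γ t :=
      (hγ.differentiableOn one_ne_zero).differentiableAt (Ico_mem_nhds ht.1 ht.2)
    have h := complexIsometry.toContinuousLinearEquiv.hasFDerivAt.comp_hasDerivAt t hd.hasDerivAt
    have h' : deriv (fun t => complexIsometry (γ t)) t = complexIsometry (deriv γ t) := h.deriv
    simp only [hv, h', LinearIsometryEquiv.norm_map]
  obtain ⟨m, hm0, hm1, hlim⟩ := exists_tendsto_div_log_sqrt (u := v)
    (hu.comp complexIsometry.contDiff : ContDiff ℝ 2 v)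
    (fun z => (hvlap z).trans_le (hsuper _)) hcomp
    ((abs_nonneg _).trans (hC 0))
    (fun z => by
      have h := (le_abs_self _).trans (hC (complexIsometry z))
      rwa [Real.exp_neg, ← div_eq_mul_inv, div_le_iff₀ (Real.exp_pos _),
        ← hvlap] at h)
    ⟨complexIsometry.symm z₀, by
      rw [hvlap, LinearIsometryEquiv.apply_symm_apply]
      exact hz₀⟩
  refine ⟨m, hm0, hm1, ?_⟩
  have hsymm : Tendsto complexIsometry.symm (comap norm atTop) (comap norm atTop) := by
    rw [tendsto_comap_iff]
    simpa [Function.comp_def] using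
      (tendsto_comap : Tendsto (norm : EuclideanSpace ℝ (Fin 2) → ℝ) (comap norm atTop) atTop)
  simpa [hv, Function.comp_def] using hlim.comp hsymm
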